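/- arXiv:1911.04349 — 4 statements merged into one kernel-verified Lean document; each statement's English description precedes it below -/
import Mathlib

section
/- For every η > 0 there exists a constant C > 0 such that for every n₀ ∈ ℤ², every real number μ ≥ 0, every point x₀ ∈ ℝ², and every radius R > 1, the number of lattice points n ∈ ℤ² satisfying |n − n₀|² = μ and |n − x₀| ≤ R is at most C·R^η. -/
theorem aux_exp (ε : ℝ) (hε : 0 < ε) : ∃ K : ℝ, 1 ≤ K ∧ ∀ y : ℝ, (2:ℝ) ^ ε ≤ y → ∀ e : ℕ,
    ((e : ℝ) + 1) ≤ K * y ^ e := by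
  have h1 : (1:ℝ) < 2 ^ ε := Real.one_lt_rpow (by norm_num) hε
  obtain ⟨d, hd⟩ : ∃ d : ℝ, d = 2 ^ ε - 1 := ⟨_, rfl⟩
  have hd0 : 0 < d := by linarith
  refine ⟨max 1 (1 / d), le_max_left _ _, fun y hy e => ?_⟩
  have h2 : 1 + (e : ℝ) * d ≤ (1 + d) ^ e := one_add_mul_le_pow (by linarith) e
  have h3 : (1 + d) ^ e ≤ y ^ e := pow_le_pow_left₀ (by linarith) (by linarith) e
  have hK1 : 1 ≤ max 1 (1 / d) := le_max_left _ _
  have hK2 : 1 ≤ max 1 (1 / d) * d := by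
    have := mul_le_mul_of_nonneg_right (le_max_right 1 (1 / d)) hd0.le
    rwa [one_div_mul_cancel hd0.ne'] at this
  have he : (0:ℝ) ≤ e := Nat.cast_nonneg e
  calc (e : ℝ) + 1 ≤ max 1 (1 / d) * (1 + e * d) := by nlinarith
    _ ≤ _ := by gcongr; linarith

/-- The multiplicative map `z ↦ N(z)^ε` on the Gaussian integers. -/
noncomputable def normPow (ε : ℝ) : GaussianInt →* ℝ where
  toFun z := ((Zsqrtd.norm z : ℤ) : ℝ) ^ ε
  map_one' := by simp
  map_mul' x y := by
    rw [Zsqrtd.norm_mul]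
    push_cast
    rw [Real.mul_rpow]
    · exact_mod_cast GaussianInt.norm_nonneg x
    · exact_mod_cast GaussianInt.norm_nonneg y

theorem norm_le_finite (B : ℝ) : {z : GaussianInt | ((Zsqrtd.norm z : ℤ) : ℝ) ≤ B}.Finite := by
  obtain ⟨N, hN⟩ := exists_nat_ge B
  have : {z : GaussianInt | ((Zsqrtd.norm z : ℤ) : ℝ) ≤ B} ⊆
      (fun p : ℤ × ℤ => (⟨p.1, p.2⟩ : GaussianInt)) ''
        ((Set.Icc (-(N:ℤ)) N) ×ˢ (Set.Icc (-(N:ℤ)) N)) := by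
    intro z hz
    have h1 : Zsqrtd.norm z ≤ (N : ℤ) := by
      have : ((Zsqrtd.norm z : ℤ) : ℝ) ≤ ((N : ℤ) : ℝ) := by
        push_cast; exact le_trans hz hN
      exact_mod_cast this
    rw [Zsqrtd.norm_def] at h1
    refine ⟨(z.re, z.im), ?_, rfl⟩
    simp only [Set.mem_prod, Set.mem_Icc]
    refine ⟨⟨?_, ?_⟩, ?_, ?_⟩ <;> nlinarith [sq_nonneg z.re, sq_nonneg z.im, Int.le_self_sq z.re, Int.le_self_sq z.im, Int.le_self_sq (-z.re), Int.le_self_sq (-z.im)]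
  exact (((Set.finite_Icc _ _).prod (Set.finite_Icc _ _)).image _).subset this

open Classical in
theorem multiset_bound (ε : ℝ) (hε : 0 < ε) : ∃ C : ℝ, 1 ≤ C ∧ ∀ S : Multiset GaussianInt,
    (∀ z ∈ S, 2 ≤ Zsqrtd.norm z) →
    ((∏ i ∈ S.toFinset, (S.count i + 1) : ℕ) : ℝ) ≤ C * normPow ε S.prod := by
  obtain ⟨K, hK, hKe⟩ := aux_exp ε hε
  have hF := norm_le_finite (2 ^ (1/ε))
  refine ⟨K ^ hF.toFinset.card, one_le_pow₀ hK, fun S hS => ?_⟩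
  have hpos : ∀ z, 0 ≤ normPow ε z := fun z =>
    Real.rpow_nonneg (by exact_mod_cast GaussianInt.norm_nonneg z) _
  have key : ∀ i ∈ S.toFinset, ((S.count i : ℝ) + 1) ≤
      (if i ∈ hF.toFinset then K else 1) * (normPow ε i) ^ (S.count i) := by
    intro i hi
    have h2 : (2:ℝ) ≤ ((Zsqrtd.norm i : ℤ) : ℝ) := by
      exact_mod_cast hS i (Multiset.mem_toFinset.1 hi)
    split_ifs with h
    · exact hKe _ (Real.rpow_le_rpow (by norm_num) h2 hε.le) _
    · have h3 : (2:ℝ) ^ (1/ε) ≤ ((Zsqrtd.norm i : ℤ) : ℝ) := by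
        by_contra h'
        apply h
        simp only [Set.Finite.mem_toFinset, Set.mem_setOf_eq]
        linarith
      have h4 : (2:ℝ) ≤ normPow ε i := by
        have := Real.rpow_le_rpow (by positivity) h3 hε.le
        rw [← Real.rpow_mul (by norm_num), one_div_mul_cancel hε.ne', Real.rpow_one] at this
        exact this
      have h5 : (S.count i : ℝ) + 1 ≤ 2 ^ (S.count i) := by
        exact_mod_cast Nat.lt_two_pow_self (n := S.count i)
      rw [one_mul]
      exact h5.trans (pow_le_pow_left₀ (by norm_num) h4 _)
  push_cast
  calc _ ≤ ∏ i ∈ S.toFinset, (if i ∈ hF.toFinset then K else 1) * (normPow ε i) ^ (S.count i) :=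
        Finset.prod_le_prod (fun i _ => by positivity) key
    _ = (∏ i ∈ S.toFinset, (if i ∈ hF.toFinset then K else 1)) * normPow ε S.prod := by
        rw [Finset.prod_mul_distrib, map_multiset_prod, Finset.prod_multiset_map_count]
    _ ≤ _ := by
        apply mul_le_mul_of_nonneg_right _ (hpos _)
        rw [Finset.prod_ite, Finset.prod_const, Finset.prod_const_one, mul_one]
        apply pow_le_pow_right₀ hK
        apply Finset.card_le_card
        intro x hx
        exact (Finset.mem_filter.1 hx).2

open Classical in
theorem gauss_count (ε : ℝ) (hε : 0 < ε) : ∃ C : ℝ, 1 ≤ C ∧ ∀ (m : ℤ), 0 < m →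
    ∀ T : Finset GaussianInt, (∀ z ∈ T, Zsqrtd.norm z = m) →
      (T.card : ℝ) ≤ C * ((m : ℝ) ^ 2) ^ ε := by
  obtain ⟨C, hC, hCS⟩ := multiset_bound ε hε
  letI : StrongNormalizationMonoid GaussianInt :=
    UniqueFactorizationMonoid.strongNormalizationMonoid
  have hU := norm_le_finite 1
  have hU1 : 1 ≤ hU.toFinset.card := Finset.card_pos.2 ⟨1, by simp⟩
  refine ⟨hU.toFinset.card * C, ?_, fun m hm T hT => ?_⟩
  · have : (1:ℝ) ≤ hU.toFinset.card := by exact_mod_cast hU1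
    nlinarith
  have hm0 : (m : GaussianInt) ≠ 0 := by exact_mod_cast hm.ne'
  have hz0 : ∀ z ∈ T, z ≠ 0 := by
    rintro z hz rfl
    have := hT 0 hz
    simp at this
    omega
  have hdvd : ∀ z ∈ T, z ∣ (m : GaussianInt) := by
    intro z hz
    rw [← hT z hz, Zsqrtd.norm_eq_mul_conj]
    exact dvd_mul_right _ _
  set S := UniqueFactorizationMonoid.normalizedFactors (m : GaussianInt) with hSdef
  have hS2 : ∀ z ∈ S, 2 ≤ Zsqrtd.norm z := by
    intro z hz
    have hp := UniqueFactorizationMonoid.prime_of_normalized_factor z hz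
    have h1 : 0 < Zsqrtd.norm z := GaussianInt.norm_pos.2 hp.ne_zero
    have h2 : Zsqrtd.norm z ≠ 1 := fun h => hp.not_unit ((Zsqrtd.norm_eq_one_iff' (by norm_num) z).1 h)
    omega
  have hSn : normPow ε S.prod = ((m : ℝ) ^ 2) ^ ε := by
    have ha := UniqueFactorizationMonoid.prod_normalizedFactors hm0
    have h3 : Zsqrtd.norm S.prod = m ^ 2 := by
      rw [Zsqrtd.norm_eq_of_associated (by norm_num) ha, Zsqrtd.norm_intCast, sq]
    change ((Zsqrtd.norm S.prod : ℤ) : ℝ) ^ ε = _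
    rw [h3]; push_cast; rfl
  have hcard : T.card ≤ hU.toFinset.card * (Finset.Iic S).card := by
    apply Finset.card_le_mul_card_image_of_maps_to
      (f := fun z => UniqueFactorizationMonoid.normalizedFactors z)
    · intro z hz
      rw [Finset.mem_Iic]
      exact (UniqueFactorizationMonoid.dvd_iff_normalizedFactors_le_normalizedFactors
        (hz0 z hz) hm0).1 (hdvd z hz)
    · intro b _
      rcases (T.filter fun z => UniqueFactorizationMonoid.normalizedFactors z = b).eq_empty_or_nonempty with h | ⟨w, hw⟩
      · rw [h]; simp
      · rw [Finset.mem_filter] at hw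
        refine le_trans (Finset.card_le_card (t := hU.toFinset.image (fun u => w * u)) ?_)
          Finset.card_image_le
        intro z hz
        rw [Finset.mem_filter] at hz
        obtain ⟨u, hu⟩ := (UniqueFactorizationMonoid.associated_iff_normalizedFactors_eq_normalizedFactors
          (hz0 w hw.1) (hz0 z hz.1)).2 (hw.2.trans hz.2.symm)
        rw [Finset.mem_image]
        refine ⟨u, ?_, hu⟩
        have := (Zsqrtd.norm_eq_one_iff' (d := -1) (by norm_num) (u : GaussianInt)).2 u.isUnit
        simp only [Set.Finite.mem_toFinset, Set.mem_setOf_eq]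
        rw [this]; simp
  rw [Multiset.card_Iic] at hcard
  have h5 := hCS S hS2
  rw [hSn] at h5
  calc (T.card : ℝ) ≤ (hU.toFinset.card : ℝ) * ((∏ i ∈ S.toFinset, (S.count i + 1) : ℕ) : ℝ) := by
        exact_mod_cast hcard
    _ ≤ (hU.toFinset.card : ℝ) * (C * ((m : ℝ) ^ 2) ^ ε) := by gcongr
    _ = _ := by ring

theorem dist_bound (a1 a2 b1 b2 x y R : ℝ) (ha : (a1 - x) ^ 2 + (a2 - y) ^ 2 ≤ R ^ 2)
    (hb : (b1 - x) ^ 2 + (b2 - y) ^ 2 ≤ R ^ 2) :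
    (b1 - a1) ^ 2 + (b2 - a2) ^ 2 ≤ 4 * R ^ 2 := by
  nlinarith [sq_nonneg (a1 - x + (b1 - x)), sq_nonneg (a2 - y + (b2 - y))]

theorem circ_identity (a1 a2 p1 p2 q1 q2 : ℝ) (hp : 2 * (a1 * p1 + a2 * p2) = -(p1 ^ 2 + p2 ^ 2))
    (hq : 2 * (a1 * q1 + a2 * q2) = -(q1 ^ 2 + q2 ^ 2)) :
    4 * (a1 ^ 2 + a2 ^ 2) * (p1 * q2 - p2 * q1) ^ 2 =
      (p1 ^ 2 + p2 ^ 2) * (q1 ^ 2 + q2 ^ 2) * ((p1 - q1) ^ 2 + (p2 - q2) ^ 2) := by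
  have h : 4 * (a1 ^ 2 + a2 ^ 2) * (p1 * q2 - p2 * q1) ^ 2 =
    ((2 * (a1 * p1 + a2 * p2)) * q1 - (2 * (a1 * q1 + a2 * q2)) * p1) ^ 2 +
    ((2 * (a1 * p1 + a2 * p2)) * q2 - (2 * (a1 * q1 + a2 * q2)) * p2) ^ 2 := by ring
  rw [h, hp, hq]; ring

theorem sq_zero_aux (a b c d : ℤ) (h : ((b:ℝ) - a) ^ 2 + ((d:ℝ) - c) ^ 2 = 0) : a = b ∧ c = d := by
  have h1 : ((b:ℝ) - a) = 0 := by nlinarith [sq_nonneg ((b:ℝ) - a), sq_nonneg ((d:ℝ) - c)]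
  have h2 : ((d:ℝ) - c) = 0 := by nlinarith [sq_nonneg ((b:ℝ) - a), sq_nonneg ((d:ℝ) - c)]
  constructor
  · have : (a:ℝ) = b := by linarith
    exact_mod_cast this
  · have : (c:ℝ) = d := by linarith
    exact_mod_cast this

theorem three_points (u v μ x y R : ℝ) (hR : 1 < R) (hμ : 16 * R ^ 6 < μ) (a b c : ℤ × ℤ)
    (ha : ((a.1 : ℝ) - u) ^ 2 + ((a.2 : ℝ) - v) ^ 2 = μ)
    (hb : ((b.1 : ℝ) - u) ^ 2 + ((b.2 : ℝ) - v) ^ 2 = μ)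
    (hc : ((c.1 : ℝ) - u) ^ 2 + ((c.2 : ℝ) - v) ^ 2 = μ)
    (ha' : ((a.1 : ℝ) - x) ^ 2 + ((a.2 : ℝ) - y) ^ 2 ≤ R ^ 2)
    (hb' : ((b.1 : ℝ) - x) ^ 2 + ((b.2 : ℝ) - y) ^ 2 ≤ R ^ 2)
    (hc' : ((c.1 : ℝ) - x) ^ 2 + ((c.2 : ℝ) - y) ^ 2 ≤ R ^ 2) :
    a = b ∨ a = c ∨ b = c := by
  have hid := circ_identity ((a.1 : ℝ) - u) ((a.2 : ℝ) - v) ((b.1 : ℝ) - a.1) ((b.2 : ℝ) - a.2)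
    ((c.1 : ℝ) - a.1) ((c.2 : ℝ) - a.2) (by linarith) (by linarith)
  have e1 := dist_bound _ _ _ _ x y R ha' hb'
  have e2 := dist_bound _ _ _ _ x y R ha' hc'
  have e3 := dist_bound _ _ _ _ x y R hc' hb'
  rw [ha] at hid
  have e4 : ((b.1 : ℝ) - a.1 - (c.1 - a.1)) ^ 2 + ((b.2 : ℝ) - a.2 - (c.2 - a.2)) ^ 2
    = ((b.1 : ℝ) - c.1) ^ 2 + ((b.2 : ℝ) - c.2) ^ 2 := by ring
  rw [e4] at hid
  have hprod : (((b.1 : ℝ) - a.1) ^ 2 + ((b.2 : ℝ) - a.2) ^ 2) *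
     (((c.1 : ℝ) - a.1) ^ 2 + ((c.2 : ℝ) - a.2) ^ 2) *
     (((b.1 : ℝ) - c.1) ^ 2 + ((b.2 : ℝ) - c.2) ^ 2) ≤ (4 * R ^ 2) * (4 * R ^ 2) * (4 * R ^ 2) := by
    gcongr
  obtain ⟨D, hD⟩ : ∃ D : ℤ, D = (b.1 - a.1) * (c.2 - a.2) - (b.2 - a.2) * (c.1 - a.1) := ⟨_, rfl⟩
  have hDr : ((b.1 : ℝ) - a.1) * (c.2 - a.2) - (b.2 - a.2) * (c.1 - a.1) = (D : ℝ) := by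
    rw [hD]; push_cast; ring
  rw [hDr] at hid
  have hR6 : 0 < R ^ 6 := by positivity
  have hD0 : D = 0 := by
    by_contra hne
    have h1 : 1 ≤ D ^ 2 := by
      have := sq_pos_of_ne_zero hne
      omega
    have h2 : (1:ℝ) ≤ (D:ℝ) ^ 2 := by exact_mod_cast h1
    have h3 : 4 * μ * 1 ≤ 4 * μ * (D:ℝ) ^ 2 :=
      mul_le_mul_of_nonneg_left h2 (by linarith)
    have h4 : (4 * R ^ 2) * (4 * R ^ 2) * (4 * R ^ 2) = 64 * R ^ 6 := by ring
    rw [h4, ← hid] at hprod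
    linarith
  rw [hD0] at hid
  have hz := hid.symm
  simp only [Int.cast_zero, ne_eq, OfNat.ofNat_ne_zero, not_false_eq_true, zero_pow, mul_zero] at hz
  rcases mul_eq_zero.1 hz with hz | hz
  · rcases mul_eq_zero.1 hz with hz | hz
    · left; exact Prod.ext_iff.2 (sq_zero_aux _ _ _ _ hz)
    · right; left; exact Prod.ext_iff.2 (sq_zero_aux _ _ _ _ hz)
  · right; right
    exact (Prod.ext_iff.2 (sq_zero_aux _ _ _ _ hz)).symm

/-- For every `η > 0` there exists `C > 0` such that for every `n₀ ∈ ℤ²`,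
every real `μ ≥ 0`, every point `x₀ ∈ ℝ²`, and every radius `R > 1`, the number of lattice
points `n ∈ ℤ²` with `|n - n₀|² = μ` and `|n - x₀| ≤ R` is at most `C * R ^ η`. -/
theorem lattice_points_on_circle_in_ball (η : ℝ) (hη : 0 < η) :
    ∃ C : ℝ, 0 < C ∧
      ∀ (n₀ : ℤ × ℤ) (μ : ℝ), 0 ≤ μ → ∀ (x₀ : ℝ × ℝ) (R : ℝ), 1 < R →
        ({n : ℤ × ℤ |
            ((n.1 : ℝ) - (n₀.1 : ℝ)) ^ 2 + ((n.2 : ℝ) - (n₀.2 : ℝ)) ^ 2 = μ ∧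
            ((n.1 : ℝ) - x₀.1) ^ 2 + ((n.2 : ℝ) - x₀.2) ^ 2 ≤ R ^ 2}).Finite ∧
        (({n : ℤ × ℤ |
            ((n.1 : ℝ) - (n₀.1 : ℝ)) ^ 2 + ((n.2 : ℝ) - (n₀.2 : ℝ)) ^ 2 = μ ∧
            ((n.1 : ℝ) - x₀.1) ^ 2 + ((n.2 : ℝ) - x₀.2) ^ 2 ≤ R ^ 2}).ncard : ℝ)
          ≤ C * R ^ η := by
  obtain ⟨C, hC, hcount⟩ := gauss_count (η / 12) (by positivity)
  refine ⟨2 + C * (16 ^ 2) ^ (η / 12), by positivity, fun n₀ μ hμ x₀ R hR => ?_⟩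
  set A := {n : ℤ × ℤ |
            ((n.1 : ℝ) - (n₀.1 : ℝ)) ^ 2 + ((n.2 : ℝ) - (n₀.2 : ℝ)) ^ 2 = μ ∧
            ((n.1 : ℝ) - x₀.1) ^ 2 + ((n.2 : ℝ) - x₀.2) ^ 2 ≤ R ^ 2} with hA
  let f : ℤ × ℤ → GaussianInt := fun n => ⟨n.1 - n₀.1, n.2 - n₀.2⟩
  have hf : Function.Injective f := by
    intro a b hab
    have h1 := congrArg Zsqrtd.re hab
    have h2 := congrArg Zsqrtd.im hab
    simp only [f] at h1 h2
    exact Prod.ext (by omega) (by omega)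
  have hfn : ∀ n ∈ A, ((Zsqrtd.norm (f n) : ℤ) : ℝ) = μ := by
    intro n hn
    rw [← hn.1, Zsqrtd.norm_def]
    simp only [f]
    push_cast
    ring
  have hfin : A.Finite := by
    apply Set.Finite.of_finite_image (f := f) _ hf.injOn
    apply (norm_le_finite μ).subset
    rintro _ ⟨n, hn, rfl⟩
    exact (hfn n hn).le
  refine ⟨hfin, ?_⟩
  rw [Set.ncard_eq_toFinset_card A hfin]
  have hR1 : (1:ℝ) ≤ R ^ η := Real.one_le_rpow hR.le hη.le
  have hCpos : 0 ≤ C * (16 ^ 2 : ℝ) ^ (η / 12) := by positivity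
  by_cases hbig : 16 * R ^ 6 < μ
  · have h2 : hfin.toFinset.card ≤ 2 := by
      by_contra hlt
      obtain ⟨a, b, c, ha, hb, hc, hab, hac, hbc⟩ := Finset.two_lt_card_iff.1 (not_le.1 hlt)
      rw [Set.Finite.mem_toFinset] at ha hb hc
      rcases three_points _ _ μ _ _ R hR hbig a b c ha.1 hb.1 hc.1 ha.2 hb.2 hc.2 with h | h | h
      · exact hab h
      · exact hac h
      · exact hbc h
    have h3 : (hfin.toFinset.card : ℝ) ≤ 2 := by exact_mod_cast h2
    nlinarith
  · rcases hfin.toFinset.eq_empty_or_nonempty with h | ⟨w, hw⟩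
    · rw [h]; simp only [Finset.card_empty, Nat.cast_zero]; positivity
    rw [Set.Finite.mem_toFinset] at hw
    have hw' := hfn w hw
    rcases (GaussianInt.norm_nonneg (f w)).eq_or_lt with h0 | h0
    · have h1 : hfin.toFinset.card ≤ 1 := by
        rw [Finset.card_le_one]
        have hz : ∀ n ∈ A, f n = 0 := by
          intro n hn
          have h := hfn n hn
          rw [← hw', ← h0] at h
          exact GaussianInt.norm_eq_zero.1 (by exact_mod_cast h)
        intro a ha b hb
        rw [Set.Finite.mem_toFinset] at ha hb
        exact hf ((hz a ha).trans (hz b hb).symm)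
      have h3 : (hfin.toFinset.card : ℝ) ≤ 1 := by exact_mod_cast h1
      nlinarith
    · have h1 := hcount _ h0 (hfin.toFinset.map ⟨f, hf⟩) (by
        intro z hz
        rw [Finset.mem_map] at hz
        obtain ⟨n, hn, rfl⟩ := hz
        rw [Set.Finite.mem_toFinset] at hn
        have h := hfn n hn
        rw [← hw'] at h
        exact_mod_cast h)
      rw [Finset.card_map, hw'] at h1
      have h2 : (μ ^ 2) ^ (η / 12) ≤ (16 ^ 2 : ℝ) ^ (η / 12) * R ^ η := by
        have h3 : μ ^ 2 ≤ 16 ^ 2 * R ^ 12 := by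
          calc μ ^ 2 ≤ (16 * R ^ 6) ^ 2 := pow_le_pow_left₀ hμ (not_lt.1 hbig) 2
            _ = _ := by ring
        have h4 := Real.rpow_le_rpow (by positivity) h3 (by positivity : 0 ≤ η / 12)
        rw [Real.mul_rpow (by positivity) (by positivity)] at h4
        have h5 : (R ^ 12) ^ (η / 12) = R ^ η := by
          rw [← Real.rpow_natCast, ← Real.rpow_mul (by positivity)]
          congr 1
          push_cast; ring
        rwa [h5] at h4
      have h6 := mul_le_mul_of_nonneg_left h2 (by linarith : 0 ≤ C)
      nlinarith
end

section
/- Let ε > 0. Then there exists C > 0 such that for all powers of two N, N₁, N₂, N₃ ≥ 1, every integer μ, and all nonnegative sequences ω⁽¹⁾, ω⁽²⁾, ω⁽³⁾ : ℤ² → [0,∞), one has ( Σ_{n ∈ ℤ², N ≤ ⟨n⟩ < 2N} ( Σ_{(n₁,n₂,n₃) ∈ (ℤ²)³ : n₁ − n₂ + n₃ = n, Φ(n,n₁,n₂,n₃) = μ, N_j ≤ ⟨n_j⟩ < 2N_j for j = 1,2,3} ω⁽¹⁾_{n₁} ω⁽²⁾_{n₂} ω⁽³⁾_{n₃} )² )^{1/2}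 ≤ C (N_med · N_min)^ε ∏_{j=1}^{3} ( Σ_{n_j ∈ ℤ², N_j ≤ ⟨n_j⟩ < 2N_j} (ω⁽ʲ⁾_{n_j})² )^{1/2}, where N_med and N_min denote the median and the minimum of {N₁, N₂, N₃}. -/
open scoped ENNReal NNReal

/-- `⟨n⟩ = (1+|n|²)^{1/2}` for `n ∈ ℤ²`. -/
noncomputable def jbZ2 (n : ℤ × ℤ) : ℝ := Real.sqrt (1 + ((n.1 : ℝ) ^ 2 + (n.2 : ℝ) ^ 2))

/-- `Φ(n,n₁,n₂,n₃) = |n|² - |n₁|² + |n₂|² - |n₃|²`. -/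
def PhiZ2 (n n₁ n₂ n₃ : ℤ × ℤ) : ℤ :=
  (n.1 ^ 2 + n.2 ^ 2) - (n₁.1 ^ 2 + n₁.2 ^ 2) + (n₂.1 ^ 2 + n₂.2 ^ 2) - (n₃.1 ^ 2 + n₃.2 ^ 2)

/-- Dyadic localization `N ≤ ⟨n⟩ < 2N`. -/
def dyadicZ2 (N : ℝ) (n : ℤ × ℤ) : Prop := N ≤ jbZ2 n ∧ jbZ2 n < 2 * N


noncomputable def gaussR (n : ℕ) : Finset GaussianInt :=
  ((Finset.Icc (-(n:ℤ)) n ×ˢ Finset.Icc (-(n:ℤ)) n).image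
    (fun p => (⟨p.1, p.2⟩ : GaussianInt))).filter (fun z => z.norm = n)

lemma mem_gaussR {n : ℕ} {z : GaussianInt} : z ∈ gaussR n ↔ z.norm = n := by
  unfold gaussR
  rw [Finset.mem_filter]
  refine ⟨fun h => h.2, fun h => ⟨?_, h⟩⟩
  rw [Finset.mem_image]
  refine ⟨(z.re, z.im), ?_, rfl⟩
  rw [Zsqrtd.norm_def] at h
  simp only [Finset.mem_product, Finset.mem_Icc]
  refine ⟨⟨?_, ?_⟩, ?_, ?_⟩ <;> nlinarith [sq_nonneg z.re, sq_nonneg z.im, sq_nonneg (z.re-1),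
    sq_nonneg (z.re+1), sq_nonneg (z.im-1), sq_nonneg (z.im+1), Int.le_self_sq z.re, Int.le_self_sq z.im, Int.le_self_sq (-z.re), Int.le_self_sq (-z.im)]

lemma gaussR_one : (gaussR 1).card ≤ 9 := by
  unfold gaussR
  refine (Finset.card_filter_le _ _).trans (Finset.card_image_le.trans ?_)
  simp

lemma gaussR_mul {a b : ℕ} (ha : 0 < a) (hb : 0 < b) (hab : Nat.Coprime a b) :
    (gaussR (a * b)).card ≤ (gaussR a).card * (gaussR b).card := by
  classical
  have : gaussR (a * b) ⊆ (gaussR a ×ˢ gaussR b).image (fun p => p.1 * p.2) := by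
    intro z hz
    rw [mem_gaussR] at hz
    have h1 : z ∣ (a : GaussianInt) * (b : GaussianInt) := by
      refine ⟨star z, ?_⟩
      rw [← Zsqrtd.norm_eq_mul_conj, hz]; push_cast; rfl
    obtain ⟨u, v, hu, hv, rfl⟩ := exists_dvd_and_dvd_of_dvd_mul h1
    have hu' : u.norm ∣ (a * a : ℤ) := by
      obtain ⟨c, hc⟩ := hu
      have := congrArg Zsqrtd.norm hc
      rw [Zsqrtd.norm_natCast, Zsqrtd.norm_mul] at this
      exact ⟨_, this⟩
    have hv' : v.norm ∣ (b * b : ℤ) := by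
      obtain ⟨c, hc⟩ := hv
      have := congrArg Zsqrtd.norm hc
      rw [Zsqrtd.norm_natCast, Zsqrtd.norm_mul] at this
      exact ⟨_, this⟩
    rw [Zsqrtd.norm_mul] at hz
    obtain ⟨x, hx⟩ := Int.eq_ofNat_of_zero_le (GaussianInt.norm_nonneg u)
    obtain ⟨y, hy⟩ := Int.eq_ofNat_of_zero_le (GaussianInt.norm_nonneg v)
    rw [hx] at hu' hz
    rw [hy] at hv' hz
    norm_cast at hu' hv' hz
    have cx : Nat.Coprime x b := Nat.Coprime.coprime_dvd_left hu' (Nat.Coprime.mul_left hab hab)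
    have cy : Nat.Coprime y a := Nat.Coprime.coprime_dvd_left hv' (Nat.Coprime.mul_left hab.symm hab.symm)
    have dx : x ∣ a := cx.dvd_of_dvd_mul_right (hz ▸ Dvd.intro _ rfl)
    have dy : y ∣ b := cy.dvd_of_dvd_mul_left (hz ▸ Dvd.intro_left _ rfl)
    have lx := Nat.le_of_dvd ha dx
    have ly := Nat.le_of_dvd hb dy
    have ex : x = a := by
      by_contra hne
      have : x < a := lt_of_le_of_ne lx hne
      have : x * y < a * b := Nat.mul_lt_mul_of_lt_of_le this ly hb
      omega
    have ey : y = b := by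
      subst ex
      exact Nat.eq_of_mul_eq_mul_left ha hz
    rw [Finset.mem_image]
    refine ⟨(u, v), ?_, rfl⟩
    rw [Finset.mem_product, mem_gaussR, mem_gaussR]
    exact ⟨by rw [hx, ex], by rw [hy, ey]⟩
  refine (Finset.card_le_card this).trans (Finset.card_image_le.trans ?_)
  rw [Finset.card_product]

lemma prime_of_norm_prime {π : GaussianInt} {p : ℕ} (hp : p.Prime) (h : π.norm = p) : Prime π := by
  rw [← irreducible_iff_prime]
  constructor
  · intro hu
    rw [← Zsqrtd.norm_eq_one_iff' (by norm_num), h] at hu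
    exact hp.one_lt.ne' (by exact_mod_cast hu)
  · intro a b hab
    have := congrArg Zsqrtd.norm hab
    rw [Zsqrtd.norm_mul, h] at this
    obtain ⟨x, hx⟩ := Int.eq_ofNat_of_zero_le (GaussianInt.norm_nonneg a)
    obtain ⟨y, hy⟩ := Int.eq_ofNat_of_zero_le (GaussianInt.norm_nonneg b)
    rw [← Zsqrtd.norm_eq_one_iff' (by norm_num), ← Zsqrtd.norm_eq_one_iff' (by norm_num)]
    rw [hx, hy] at this ⊢
    norm_cast at this ⊢
    rcases (Nat.dvd_prime hp).1 ⟨y, this⟩ with h1 | h1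
    · left; exact h1
    · right; subst h1
      exact Nat.eq_of_mul_eq_mul_left hp.pos (by omega)

lemma exists_prime_factors {p : ℕ} (hp : p.Prime) : ∃ π σ : GaussianInt, Prime π ∧ Prime σ ∧
    (p : GaussianInt) ∣ π * σ := by
  have := Fact.mk hp
  by_cases h : p % 4 = 3
  · exact ⟨p, p, GaussianInt.prime_of_nat_prime_of_mod_four_eq_three p h,
      GaussianInt.prime_of_nat_prime_of_mod_four_eq_three p h, Dvd.intro _ rfl⟩
  · obtain ⟨a, b, hab⟩ := Nat.Prime.sq_add_sq h
    have h1 : (⟨a, b⟩ : GaussianInt).norm = p := by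
      rw [Zsqrtd.norm_def, ← hab]; push_cast; ring
    refine ⟨⟨a, b⟩, star ⟨a, b⟩, prime_of_norm_prime hp h1,
      prime_of_norm_prime hp ((Zsqrtd.norm_conj _).trans h1), ?_⟩
    rw [← Zsqrtd.norm_eq_mul_conj, h1]; simp

lemma gaussR_prime_pow {p k : ℕ} (hp : p.Prime) :
    (gaussR (p ^ k)).card ≤ 9 * (k + 1) ^ 2 := by
  classical
  obtain ⟨π, σ, hπ, hσ, hd⟩ := exists_prime_factors hp
  have : gaussR (p ^ k) ⊆ (gaussR 1 ×ˢ (Finset.range (k+1) ×ˢ Finset.range (k+1))).image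
      (fun q => π ^ q.2.1 * σ ^ q.2.2 * q.1) := by
    intro z hz
    rw [mem_gaussR] at hz
    have h1 : z ∣ π ^ k * σ ^ k := by
      rw [← mul_pow]
      refine dvd_trans ⟨star z, ?_⟩ (pow_dvd_pow_of_dvd hd k)
      rw [← Zsqrtd.norm_eq_mul_conj, hz]; push_cast; rfl
    obtain ⟨u, v, hu, hv, rfl⟩ := exists_dvd_and_dvd_of_dvd_mul h1
    obtain ⟨i, hi, hi'⟩ := (dvd_prime_pow hπ k).1 hu
    obtain ⟨j, hj, hj'⟩ := (dvd_prime_pow hσ k).1 hv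
    obtain ⟨c, hc⟩ := (hi'.mul_mul hj').symm
    rw [Finset.mem_image]
    refine ⟨((c : GaussianInt), i, j), ?_, hc⟩
    simp only [Finset.mem_product, Finset.mem_range, mem_gaussR]
    refine ⟨?_, by omega, by omega⟩
    have := (Zsqrtd.norm_eq_one_iff' (by norm_num) (c : GaussianInt)).2 c.isUnit
    simpa using this
  refine (Finset.card_le_card this).trans (Finset.card_image_le.trans ?_)
  rw [Finset.card_product, Finset.card_product, Finset.card_range]
  have := gaussR_one
  nlinarith [Nat.mul_le_mul_right ((k+1)*(k+1)) this]

lemma poly_exp_bound (δ : ℝ) (hδ : 0 < δ) : ∃ A : ℝ, 1 ≤ A ∧ ∀ k : ℕ,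
    9 * ((k:ℝ) + 1) ^ 2 ≤ A * (2:ℝ) ^ (δ * k) := by
  have hc : 0 < δ * Real.log 2 / 2 := by positivity
  set c := δ * Real.log 2 / 2 with hcd
  set B := max 1 (1 / c) with hB
  have hB1 : 1 ≤ B := le_max_left _ _
  have hB2 : 1 ≤ B * c := by
    have : 1 / c ≤ B := le_max_right _ _
    rwa [div_le_iff₀ hc] at this
  refine ⟨9 * B ^ 2, by nlinarith, fun k => ?_⟩
  have h1 : (2:ℝ) ^ (δ * k) = (Real.exp (c * k)) ^ 2 := by
    rw [Real.rpow_def_of_pos (by norm_num), ← Real.exp_nat_mul]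
    congr 1; rw [hcd]; push_cast; ring
  have h2 : (k:ℝ) + 1 ≤ B * Real.exp (c * k) := by
    have := Real.add_one_le_exp (c * k)
    calc (k:ℝ) + 1 ≤ B * (c * k + 1) := by nlinarith [Nat.cast_nonneg (α := ℝ) k]
      _ ≤ _ := by gcongr
  rw [h1]
  calc 9 * ((k:ℝ) + 1) ^ 2 ≤ 9 * (B * Real.exp (c * k)) ^ 2 := by gcongr
    _ = _ := by ring

lemma gaussR_bound (δ : ℝ) (hδ : 0 < δ) : ∃ C : ℝ, 1 ≤ C ∧ ∀ n : ℕ, 0 < n →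
    ((gaussR n).card : ℝ) ≤ C * (n : ℝ) ^ δ := by
  obtain ⟨A, hA1, hA⟩ := poly_exp_bound δ hδ
  obtain ⟨P, hP⟩ := exists_nat_ge ((36:ℝ) ^ (1/δ))
  have key : ∀ n : ℕ, 1 < n → ((gaussR n).card : ℝ) ≤
      A ^ (n.primeFactors.filter (· < P)).card * (n:ℝ) ^ δ := by
    intro n
    induction n using Nat.recOnPosPrimePosCoprime with
    | zero => intro h; omega
    | one => intro h; omega
    | prime_pow p k hp hk =>
      intro _
      have hb : ((gaussR (p ^ k)).card : ℝ) ≤ 9 * ((k:ℝ) + 1) ^ 2 := by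
        exact_mod_cast gaussR_prime_pow (k := k) hp
      refine hb.trans ?_
      have hpk : (((p ^ k : ℕ) : ℝ)) ^ δ = (p:ℝ) ^ (δ * k) := by
        push_cast
        rw [← Real.rpow_natCast, ← Real.rpow_mul (by positivity), mul_comm]
      rw [hpk, Nat.primeFactors_prime_pow hk.ne' hp, Finset.filter_singleton]
      have hp2 : (2:ℝ) ≤ p := by exact_mod_cast hp.two_le
      split_ifs with h
      · rw [Finset.card_singleton, pow_one]
        refine (hA k).trans ?_
        gcongr
      · rw [Finset.card_empty, pow_zero, one_mul]
        have h36 : (36:ℝ) ≤ (p:ℝ) ^ δ := by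
          have h1 : (36:ℝ) ^ (1/δ) ≤ p := hP.trans (by exact_mod_cast not_lt.1 h)
          calc (36:ℝ) = ((36:ℝ) ^ (1/δ)) ^ δ := by
                rw [← Real.rpow_mul (by norm_num), one_div, inv_mul_cancel₀ hδ.ne', Real.rpow_one]
            _ ≤ _ := by gcongr
        rw [Real.rpow_mul (by positivity), Real.rpow_natCast]
        have h2 : (k:ℝ) + 1 ≤ 2 ^ k := by exact_mod_cast Nat.lt_two_pow_self (n := k)
        have h9 : (9:ℝ) ≤ 9 ^ k := le_self_pow₀ (by norm_num) hk.ne'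
        calc 9 * ((k:ℝ) + 1) ^ 2 ≤ 9 ^ k * (2 ^ k) ^ 2 := by gcongr
          _ = 36 ^ k := by rw [← pow_mul, mul_comm k 2, pow_mul, ← mul_pow]; norm_num
          _ ≤ _ := by gcongr
    | coprime a b ha hb hab iha ihb =>
      intro _
      have h1 : ((gaussR (a * b)).card : ℝ) ≤ (gaussR a).card * (gaussR b).card := by
        exact_mod_cast gaussR_mul (by omega) (by omega) hab
      refine h1.trans ((mul_le_mul (iha ha) (ihb hb) (by positivity) (by positivity)).trans ?_)
      rw [hab.primeFactors_mul, Finset.filter_union, Finset.card_union_of_disjoint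
        (Finset.disjoint_filter_filter hab.disjoint_primeFactors), pow_add]
      push_cast
      rw [Real.mul_rpow (by positivity) (by positivity)]
      apply le_of_eq; ring
  refine ⟨9 * A ^ P, by nlinarith [one_le_pow₀ hA1 (n := P)], fun n hn => ?_⟩
  have hAP : 1 ≤ A ^ P := one_le_pow₀ hA1
  rcases Nat.lt_or_ge 1 n with h | h
  · refine (key n h).trans ?_
    gcongr
    have : (n.primeFactors.filter (· < P)).card ≤ P := by
      calc _ ≤ (Finset.range P).card := Finset.card_le_card (by
            intro x hx
            rw [Finset.mem_filter] at hx
            exact Finset.mem_range.2 hx.2)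
        _ = P := Finset.card_range P
    calc A ^ (n.primeFactors.filter (· < P)).card ≤ A ^ P := pow_le_pow_right₀ hA1 this
      _ ≤ _ := by linarith
  · obtain rfl : n = 1 := by omega
    have : ((gaussR 1).card : ℝ) ≤ 9 := by exact_mod_cast gaussR_one
    simp only [Nat.cast_one, Real.one_rpow]
    linarith

def qZ (z : ℤ × ℤ) : ℤ := z.1 ^ 2 + z.2 ^ 2

lemma circle_identity {x y z : ℤ × ℤ} {M : ℤ} (hx : qZ x = M) (hy : qZ y = M) (hz : qZ z = M) :
    qZ (y - x) * qZ (z - x) * qZ (y - z) =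
      4 * M * ((y.1 - x.1) * (z.2 - x.2) - (y.2 - x.2) * (z.1 - x.1)) ^ 2 := by
  obtain ⟨x1, x2⟩ := x
  obtain ⟨y1, y2⟩ := y
  obtain ⟨z1, z2⟩ := z
  simp only [qZ, Prod.mk_sub_mk] at *
  obtain ⟨u1, rfl⟩ : ∃ u, y1 = x1 + u := ⟨y1 - x1, by ring⟩
  obtain ⟨u2, rfl⟩ : ∃ u, y2 = x2 + u := ⟨y2 - x2, by ring⟩
  obtain ⟨v1, rfl⟩ : ∃ u, z1 = x1 + u := ⟨z1 - x1, by ring⟩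
  obtain ⟨v2, rfl⟩ : ∃ u, z2 = x2 + u := ⟨z2 - x2, by ring⟩
  have e1 : 2 * (x1 * u1 + x2 * u2) = -(u1^2 + u2^2) := by linarith
  have e2 : 2 * (x1 * v1 + x2 * v2) = -(v1^2 + v2^2) := by linarith
  have f1 : 2 * x1 * (u1 * v2 - u2 * v1) = -(u1^2 + u2^2) * v2 + (v1^2 + v2^2) * u2 := by
    linear_combination v2 * e1 - u2 * e2
  have f2 : 2 * x2 * (u1 * v2 - u2 * v1) = (u1^2 + u2^2) * v1 - (v1^2 + v2^2) * u1 := by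
    linear_combination -v1 * e1 + u1 * e2
  have : 4 * M * (u1 * v2 - u2 * v1)^2 = (2 * x1 * (u1 * v2 - u2 * v1))^2
      + (2 * x2 * (u1 * v2 - u2 * v1))^2 := by rw [← hx]; ring
  simp only [add_sub_cancel_left]
  rw [this, f1, f2]; ring

lemma qZ_nonneg (z : ℤ × ℤ) : 0 ≤ qZ z := by unfold qZ; positivity

lemma qZ_pos {z : ℤ × ℤ} (h : z ≠ 0) : 0 < qZ z := by
  refine lt_of_le_of_ne (qZ_nonneg z) fun h0 => h ?_
  unfold qZ at h0
  ext
  · simp; nlinarith [sq_nonneg z.1, sq_nonneg z.2]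
  · simp; nlinarith [sq_nonneg z.1, sq_nonneg z.2]

lemma circle_count (δ : ℝ) (hδ : 0 < δ) : ∃ C : ℝ, 1 ≤ C ∧ ∀ (s : Finset (ℤ × ℤ)) (M D : ℤ),
    1 ≤ D → (∀ z ∈ s, qZ z = M) → (∀ z ∈ s, ∀ w ∈ s, qZ (z - w) ≤ D) →
    (s.card : ℝ) ≤ C * (D : ℝ) ^ δ := by
  obtain ⟨C, hC1, hC⟩ := gaussR_bound (δ / 3) (by positivity)
  refine ⟨2 * C, by linarith, fun s M D hD hM hs => ?_⟩
  have hD' : (1:ℝ) ≤ D := by exact_mod_cast hD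
  have hDδ : (1:ℝ) ≤ (D:ℝ) ^ δ := Real.one_le_rpow hD' hδ.le
  rcases Nat.lt_or_ge 2 s.card with h | h
  · obtain ⟨x, hx, y, hy, z, hz, hxy, hxz, hyz⟩ := Finset.two_lt_card.1 h
    have hid := circle_identity (hM x hx) (hM y hy) (hM z hz)
    set t := ((y.1 - x.1) * (z.2 - x.2) - (y.2 - x.2) * (z.1 - x.1)) with ht
    have p1 := qZ_pos (sub_ne_zero.2 hxy.symm)
    have p2 := qZ_pos (sub_ne_zero.2 hxz.symm)
    have p3 := qZ_pos (sub_ne_zero.2 hyz)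
    have hpos : 0 < 4 * M * t ^ 2 := by rw [← hid]; positivity
    have hM0 : 0 < M := by
      by_contra hn
      nlinarith [sq_nonneg t]
    have ht1 : 1 ≤ t ^ 2 := by
      by_contra hn
      have : t ^ 2 = 0 := by nlinarith [sq_nonneg t]
      rw [this] at hpos; simp at hpos
    have hMD : M ≤ D ^ 3 := by
      have h3 : qZ (y - x) * qZ (z - x) * qZ (y - z) ≤ D * D * D := by
        gcongr
        · exact hs y hy x hx
        · exact hs z hz x hx
        · exact hs y hy z hz
      nlinarith
    lift M to ℕ using hM0.le
    have hcard : s.card ≤ (gaussR M).card := by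
      refine Finset.card_le_card_of_injOn (fun p => (⟨p.1, p.2⟩ : GaussianInt)) ?_ ?_
      · intro p hp
        have := hM p hp
        unfold qZ at this
        rw [Finset.mem_coe, mem_gaussR, Zsqrtd.norm_def, ← this]
        ring
      · intro p _ q _ hpq
        simp only [Zsqrtd.mk.injEq] at hpq
        exact Prod.ext hpq.1 hpq.2
    have hMr : (M:ℝ) ≤ (D:ℝ) ^ 3 := by exact_mod_cast hMD
    calc (s.card : ℝ) ≤ (gaussR M).card := by exact_mod_cast hcard
      _ ≤ C * (M:ℝ) ^ (δ/3) := hC M (by exact_mod_cast hM0)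
      _ ≤ C * ((D:ℝ) ^ 3) ^ (δ/3) := by gcongr
      _ = C * (D:ℝ) ^ δ := by
        rw [← Real.rpow_natCast, ← Real.rpow_mul (by positivity)]
        congr 2; push_cast; ring
      _ ≤ _ := by nlinarith
  · have : (s.card : ℝ) ≤ 2 := by exact_mod_cast h
    nlinarith

lemma ennreal_cs {ι : Type*} (f g : ι → ℝ≥0∞) :
    (∑' i, f i * g i) ^ 2 ≤ (∑' i, f i ^ 2) * (∑' i, g i ^ 2) := by
  have h : ∑' i, f i * g i ≤ ((∑' i, f i ^ 2) * (∑' i, g i ^ 2)) ^ (1/2 : ℝ) := by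
    rw [ENNReal.tsum_eq_iSup_sum]
    refine iSup_le fun s => ?_
    have := ENNReal.inner_le_Lp_mul_Lq s f g (p := 2) (q := 2) (by constructor <;> norm_num)
    refine this.trans ?_
    rw [← ENNReal.mul_rpow_of_nonneg _ _ (by norm_num)]
    simp only [ENNReal.rpow_two]
    gcongr <;> exact ENNReal.sum_le_tsum _
  calc (∑' i, f i * g i) ^ 2 ≤ (((∑' i, f i ^ 2) * (∑' i, g i ^ 2)) ^ (1/2 : ℝ)) ^ 2 := by gcongr
    _ = _ := by rw [← ENNReal.rpow_two, ← ENNReal.rpow_mul]; norm_num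

lemma tsum_fiber {α β τ : Type*} [DecidableEq τ] (φ : α → τ) (ψ : β → τ) (f : α → ℝ≥0∞)
    (g : β → ℝ≥0∞) :
    ∑' t, (∑' p, if φ p = t then f p else 0) * (∑' p, if ψ p = t then g p else 0)
      = ∑' p, ∑' p', if φ p = ψ p' then f p * g p' else 0 := by
  simp_rw [← ENNReal.tsum_mul_right, ← ENNReal.tsum_mul_left]
  rw [ENNReal.tsum_comm]
  refine tsum_congr fun p => ?_
  rw [ENNReal.tsum_comm]
  refine tsum_congr fun p' => ?_
  rw [tsum_eq_single (φ p)]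
  · simp [eq_comm]
  · intro t ht
    simp [ht.symm]

noncomputable def energyZ {α τ : Type*} [DecidableEq τ] (φ : α → τ) (f : α → ℝ≥0∞) : ℝ≥0∞ :=
  ∑' p, ∑' p', if φ p = φ p' then f p * f p' else 0

lemma fiber_cs {α β τ : Type*} [DecidableEq τ] (φ : α → τ) (ψ : β → τ) (f : α → ℝ≥0∞)
    (g : β → ℝ≥0∞) :
    (∑' p, ∑' p', if φ p = ψ p' then f p * g p' else 0) ^ 2 ≤ energyZ φ f * energyZ ψ g := by
  unfold energyZ
  rw [← tsum_fiber, ← tsum_fiber, ← tsum_fiber]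
  simp_rw [← pow_two]
  exact ennreal_cs _ _

lemma energy_le {α τ : Type*} [DecidableEq τ] (φ : α → τ) (f : α → ℝ≥0∞) (K : ℝ≥0∞)
    (h : ∀ t, ∀ s : Finset α, (∀ p ∈ s, φ p = t ∧ f p ≠ 0) → (s.card : ℝ≥0∞) ≤ K) :
    energyZ φ f ≤ K * ∑' p, f p ^ 2 := by
  classical
  unfold energyZ
  rw [← tsum_fiber]
  simp_rw [← pow_two]
  have h1 : ∀ t, (∑' p, if φ p = t then f p else 0) ^ 2 ≤
      K * ∑' p, if φ p = t then f p ^ 2 else 0 := by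
    intro t
    have e : ∀ p, (if φ p = t then f p else 0) =
        (if φ p = t ∧ f p ≠ 0 then 1 else 0) * (if φ p = t then f p else 0) := by
      intro p
      by_cases h1 : φ p = t <;> by_cases h2 : f p = 0 <;> simp [h1, h2]
    rw [tsum_congr e]
    refine (ennreal_cs _ _).trans ?_
    have e2 : ∀ p, (if φ p = t then f p else 0) ^ 2 = if φ p = t then f p ^ 2 else 0 := by
      intro p; split_ifs <;> simp
    rw [tsum_congr e2]
    gcongr
    rw [ENNReal.tsum_eq_iSup_sum]
    refine iSup_le fun s => ?_
    calc _ = ∑ p ∈ s, (if φ p = t ∧ f p ≠ 0 then (1:ℝ≥0∞) else 0) := by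
          refine Finset.sum_congr rfl fun p _ => ?_
          split_ifs <;> simp
      _ = ((s.filter (fun p => φ p = t ∧ f p ≠ 0)).card : ℝ≥0∞) := by
          rw [Finset.sum_boole]
      _ ≤ K := h t _ (fun p hp => (Finset.mem_filter.1 hp).2)
  refine (ENNReal.tsum_le_tsum h1).trans ?_
  rw [ENNReal.tsum_mul_left, ENNReal.tsum_comm]
  gcongr with p
  rw [tsum_eq_single (φ p)]
  · simp
  · intro t ht
    simp [ht.symm]

abbrev VZ := ℤ × ℤ

lemma tsum_VV (f : VZ × VZ → ℝ≥0∞) : ∑' p, f p = ∑' (x : VZ) (y : VZ), f (x, y) :=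
  ENNReal.tsum_prod'

def phiB (p : VZ × VZ) : VZ × ℤ := (p.1 + p.2, qZ p.1 + qZ p.2)
def phiA (p : VZ × VZ) : VZ × ℤ := (p.1 - p.2, qZ p.1 - qZ p.2)
def shiftZ (μ : ℤ) (t : VZ × ℤ) : VZ × ℤ := (t.1, t.2 + μ)

lemma shiftZ_inj (μ : ℤ) : Function.Injective (shiftZ μ) := by
  intro a b h
  simp only [shiftZ, Prod.mk.injEq, add_left_inj] at h
  exact Prod.ext h.1 h.2

lemma energy_shift (μ : ℤ) {α : Type*} (φ : α → VZ × ℤ) (f : α → ℝ≥0∞) :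
    energyZ (fun p => shiftZ μ (φ p)) f = energyZ φ f := by
  unfold energyZ
  simp only [(shiftZ_inj μ).eq_iff]

lemma energy_A_eq_B (a b : VZ → ℝ≥0∞) :
    energyZ phiA (fun p => a p.1 * b p.2) = energyZ phiB (fun p => a p.1 * b p.2) := by
  unfold energyZ
  simp only [tsum_VV]
  refine tsum_congr fun x => ?_
  calc _ = ∑' (x' : VZ) (y : VZ) (y' : VZ), (if phiA (x, y) = phiA (x', y') then
          a x * b y * (a x' * b y') else 0) := ENNReal.tsum_comm
    _ = ∑' (x' : VZ) (y' : VZ) (y : VZ), (if phiA (x, y) = phiA (x', y') then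
          a x * b y * (a x' * b y') else 0) := tsum_congr fun x' => ENNReal.tsum_comm
    _ = ∑' (x' : VZ) (y : VZ) (y' : VZ), (if phiB (x, y) = phiB (x', y') then
          a x * b y * (a x' * b y') else 0) := by
        refine tsum_congr fun x' => tsum_congr fun y => tsum_congr fun y' => ?_
        have : (phiA (x, y') = phiA (x', y)) ↔ (phiB (x, y) = phiB (x', y')) := by
          simp only [phiA, phiB, Prod.mk.injEq]
          rw [sub_eq_sub_iff_add_eq_add, sub_eq_sub_iff_add_eq_add]
        simp only [this]
        congr 1
        ring
    _ = _ := ENNReal.tsum_comm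

lemma qZ_parallelogram (x y : VZ) : qZ (x - y) = 2 * (qZ x + qZ y) - qZ (x + y) := by
  simp only [qZ, Prod.fst_sub, Prod.snd_sub, Prod.fst_add, Prod.snd_add]; ring

lemma energy_B_le (δ : ℝ) (hδ : 0 < δ) : ∃ C : ℝ, 0 < C ∧ ∀ (j : ℕ) (a b : VZ → ℝ≥0∞),
    ((∀ x, a x ≠ 0 → qZ x ≤ 4 * 4 ^ j) ∨ (∀ x, b x ≠ 0 → qZ x ≤ 4 * 4 ^ j)) →
    energyZ phiB (fun p => a p.1 * b p.2) ≤ ENNReal.ofReal (C * ((2:ℝ) ^ j) ^ (2 * δ)) *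
      ((∑' x, a x ^ 2) * ∑' y, b y ^ 2) := by
  obtain ⟨C, hC1, hC⟩ := circle_count δ hδ
  refine ⟨C * (64:ℝ) ^ δ, by positivity, fun j a b hab => ?_⟩
  have e : ∑' p : VZ × VZ, (a p.1 * b p.2) ^ 2 = (∑' x, a x ^ 2) * ∑' y, b y ^ 2 := by
    rw [ENNReal.tsum_prod']
    simp_rw [mul_pow, ENNReal.tsum_mul_left, ENNReal.tsum_mul_right]
  rw [← e]
  refine energy_le _ _ _ fun t s hs => ?_
  have hcard : (s.card : ℝ) ≤ C * (((64 * 4 ^ j : ℤ)) : ℝ) ^ δ := by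
    classical
    have hi : s.card = (s.image (fun p => p.1 - p.2)).card := by
      rw [Finset.card_image_of_injOn]
      intro p hp p' hp' h
      have h1 := congrArg Prod.fst ((hs p hp).1.trans (hs p' hp').1.symm)
      simp only [phiB] at h1 h
      ext <;> simp only [Prod.ext_iff, Prod.fst_sub, Prod.snd_sub, Prod.fst_add, Prod.snd_add] at h h1 <;> omega
    rw [hi]
    refine hC _ (2 * t.2 - qZ t.1) _ (by nlinarith [one_le_pow₀ (show (1:ℤ) ≤ 4 by norm_num) (n := j)]) ?_ ?_
    · intro z hz
      obtain ⟨p, hp, rfl⟩ := Finset.mem_image.1 hz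
      have := (hs p hp).1
      rw [← this, qZ_parallelogram]
      simp only [phiB]
    · intro z hz w hw
      obtain ⟨p, hp, rfl⟩ := Finset.mem_image.1 hz
      obtain ⟨p', hp', rfl⟩ := Finset.mem_image.1 hw
      have h1 := congrArg Prod.fst ((hs p hp).1.trans (hs p' hp').1.symm)
      simp only [phiB] at h1
      have bd : ∀ u v : VZ, qZ u ≤ 4 * 4 ^ j → qZ v ≤ 4 * 4 ^ j → 4 * qZ (u - v) ≤ 64 * 4 ^ j := by
        intro u v hu hv
        have := qZ_parallelogram u v
        have := qZ_nonneg (u + v)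
        linarith
      have n1 := (hs p hp).2
      have n2 := (hs p' hp').2
      simp only [ne_eq, mul_eq_zero, not_or] at n1 n2
      simp only [Prod.ext_iff, Prod.fst_add, Prod.snd_add] at h1
      rcases hab with h | h
      · have := bd _ _ (h _ n1.1) (h _ n2.1)
        convert this using 1
        simp only [qZ, Prod.fst_sub, Prod.snd_sub]
        rw [show p.1.1 - p.2.1 - (p'.1.1 - p'.2.1) = 2 * (p.1.1 - p'.1.1) by linarith,
          show p.1.2 - p.2.2 - (p'.1.2 - p'.2.2) = 2 * (p.1.2 - p'.1.2) by linarith]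
        ring
      · have := bd _ _ (h _ n1.2) (h _ n2.2)
        convert this using 1
        simp only [qZ, Prod.fst_sub, Prod.snd_sub]
        rw [show p.1.1 - p.2.1 - (p'.1.1 - p'.2.1) = -2 * (p.2.1 - p'.2.1) by linarith,
          show p.1.2 - p.2.2 - (p'.1.2 - p'.2.2) = -2 * (p.2.2 - p'.2.2) by linarith]
        ring
  rw [← ENNReal.ofReal_natCast]
  apply ENNReal.ofReal_le_ofReal
  refine hcard.trans (le_of_eq ?_)
  push_cast
  rw [Real.mul_rpow (by norm_num) (by positivity), Real.rpow_mul (by positivity), mul_assoc]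
  congr 3
  rw [Real.rpow_two, ← pow_mul, mul_comm j 2, pow_mul]; norm_num

noncomputable def quadZ (μ : ℤ) (w₀ w₁ w₂ w₃ : VZ → ℝ≥0∞) : ℝ≥0∞ :=
  ∑' n, ∑' n₁, ∑' n₂, ∑' n₃, if n₁ - n₂ + n₃ = n ∧ qZ n - qZ n₁ + qZ n₂ - qZ n₃ = μ then
    w₀ n * (w₁ n₁ * w₂ n₂ * w₃ n₃) else 0

lemma quad_B (μ : ℤ) (w₀ w₁ w₂ w₃ : VZ → ℝ≥0∞) : (quadZ μ w₀ w₁ w₂ w₃) ^ 2 ≤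
    energyZ phiB (fun p => w₀ p.1 * w₂ p.2) * energyZ phiB (fun p => w₁ p.1 * w₃ p.2) := by
  rw [← energy_shift μ phiB (fun p => w₁ p.1 * w₃ p.2)]
  refine le_trans (le_of_eq ?_) (fiber_cs _ _ _ _)
  congr 1
  unfold quadZ
  simp only [tsum_VV]
  refine tsum_congr fun n => ?_
  rw [ENNReal.tsum_comm]
  refine tsum_congr fun n₂ => tsum_congr fun n₁ => tsum_congr fun n₃ => ?_
  have : (n₁ - n₂ + n₃ = n ∧ qZ n - qZ n₁ + qZ n₂ - qZ n₃ = μ) ↔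
      phiB (n, n₂) = shiftZ μ (phiB (n₁, n₃)) := by
    simp only [phiB, shiftZ, Prod.ext_iff, Prod.fst_sub, Prod.snd_sub, Prod.fst_add, Prod.snd_add]
    omega
  simp only [this]
  congr 1
  ring

lemma quad_A1 (μ : ℤ) (w₀ w₁ w₂ w₃ : VZ → ℝ≥0∞) : (quadZ μ w₀ w₁ w₂ w₃) ^ 2 ≤
    energyZ phiB (fun p => w₀ p.1 * w₁ p.2) * energyZ phiB (fun p => w₃ p.1 * w₂ p.2) := by
  rw [← energy_A_eq_B, ← energy_A_eq_B, ← energy_shift μ phiA (fun p => w₃ p.1 * w₂ p.2)]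
  refine le_trans (le_of_eq ?_) (fiber_cs _ _ _ _)
  congr 1
  unfold quadZ
  simp only [tsum_VV]
  refine tsum_congr fun n => tsum_congr fun n₁ => ?_
  rw [ENNReal.tsum_comm]
  refine tsum_congr fun n₃ => tsum_congr fun n₂ => ?_
  have : (n₁ - n₂ + n₃ = n ∧ qZ n - qZ n₁ + qZ n₂ - qZ n₃ = μ) ↔
      phiA (n, n₁) = shiftZ μ (phiA (n₃, n₂)) := by
    simp only [phiA, shiftZ, Prod.ext_iff, Prod.fst_sub, Prod.snd_sub, Prod.fst_add, Prod.snd_add]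
    omega
  simp only [this]
  congr 1
  ring

lemma quad_symm (μ : ℤ) (w₀ w₁ w₂ w₃ : VZ → ℝ≥0∞) :
    quadZ μ w₀ w₁ w₂ w₃ = quadZ μ w₀ w₃ w₂ w₁ := by
  unfold quadZ
  refine tsum_congr fun n => ?_
  calc _ = ∑' (n₂ : VZ) (n₁ : VZ) (n₃ : VZ), (if n₁ - n₂ + n₃ = n ∧
          qZ n - qZ n₁ + qZ n₂ - qZ n₃ = μ then w₀ n * (w₁ n₁ * w₂ n₂ * w₃ n₃) else 0) :=
        ENNReal.tsum_comm
    _ = ∑' (n₂ : VZ) (n₃ : VZ) (n₁ : VZ), (if n₁ - n₂ + n₃ = n ∧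
          qZ n - qZ n₁ + qZ n₂ - qZ n₃ = μ then w₀ n * (w₁ n₁ * w₂ n₂ * w₃ n₃) else 0) :=
        tsum_congr fun n₂ => ENNReal.tsum_comm
    _ = ∑' (n₃ : VZ) (n₂ : VZ) (n₁ : VZ), (if n₁ - n₂ + n₃ = n ∧
          qZ n - qZ n₁ + qZ n₂ - qZ n₃ = μ then w₀ n * (w₁ n₁ * w₂ n₂ * w₃ n₃) else 0) :=
        ENNReal.tsum_comm
    _ = _ := by
      refine tsum_congr fun n₃ => tsum_congr fun n₂ => tsum_congr fun n₁ => ?_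
      have : (n₁ - n₂ + n₃ = n ∧ qZ n - qZ n₁ + qZ n₂ - qZ n₃ = μ) ↔
          (n₃ - n₂ + n₁ = n ∧ qZ n - qZ n₃ + qZ n₂ - qZ n₁ = μ) := by
        simp only [Prod.ext_iff, Prod.fst_sub, Prod.snd_sub, Prod.fst_add, Prod.snd_add]
        omega
      simp only [this]
      congr 1
      ring

lemma quad_bound (ε : ℝ) (hε : 0 < ε) : ∃ C : ℝ, 0 < C ∧ ∀ (k₁ k₂ k₃ : ℕ) (μ : ℤ)
    (w₀ w₁ w₂ w₃ : VZ → ℝ≥0∞), (∀ x, w₁ x ≠ 0 → qZ x ≤ 4 * 4 ^ k₁) →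
    (∀ x, w₂ x ≠ 0 → qZ x ≤ 4 * 4 ^ k₂) → (∀ x, w₃ x ≠ 0 → qZ x ≤ 4 * 4 ^ k₃) →
    (quadZ μ w₀ w₁ w₂ w₃) ^ 2 ≤ ENNReal.ofReal
            (C * ((2 : ℝ) ^ (max (min k₁ k₂) (min (max k₁ k₂) k₃)) *
                  (2 : ℝ) ^ (min k₁ (min k₂ k₃))) ^ ε) ^ 2 *
      ((∑' x, w₀ x ^ 2) * ((∑' x, w₁ x ^ 2) * (∑' x, w₂ x ^ 2) * (∑' x, w₃ x ^ 2))) := by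
  obtain ⟨C, hC0, hC⟩ := energy_B_le ε hε
  refine ⟨C, hC0, fun k₁ k₂ k₃ μ w₀ w₁ w₂ w₃ h₁ h₂ h₃ => ?_⟩
  have hK : ∀ i j M m : ℕ, i + j = M + m → ENNReal.ofReal (C * ((2:ℝ) ^ i) ^ (2 * ε)) *
      ENNReal.ofReal (C * ((2:ℝ) ^ j) ^ (2 * ε)) =
      ENNReal.ofReal (C * ((2 : ℝ) ^ M * (2 : ℝ) ^ m) ^ ε) ^ 2 := by
    intro i j M m h
    rw [← ENNReal.ofReal_mul (by positivity), ← ENNReal.ofReal_pow (by positivity)]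
    congr 1
    rw [← pow_add, ← h, mul_comm 2 ε, Real.rpow_mul (by positivity), Real.rpow_mul (by positivity),
      pow_add, Real.mul_rpow (by positivity) (by positivity), Real.rpow_two, Real.rpow_two]
    ring
  have hor : ∀ (i j : ℕ) (a b : VZ → ℝ≥0∞), (∀ x, a x ≠ 0 → qZ x ≤ 4 * 4 ^ i) →
      (∀ x, b x ≠ 0 → qZ x ≤ 4 * 4 ^ j) → ((∀ x, a x ≠ 0 → qZ x ≤ 4 * 4 ^ (min i j)) ∨
        (∀ x, b x ≠ 0 → qZ x ≤ 4 * 4 ^ (min i j))) := by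
    intro i j a b ha hb
    rcases le_total i j with h | h
    · left; rwa [min_eq_left h]
    · right; rwa [min_eq_right h]
  by_cases c2 : k₂ ≤ k₁ ∧ k₂ ≤ k₃
  · refine (quad_B μ w₀ w₁ w₂ w₃).trans
      ((mul_le_mul' (hC k₂ w₀ w₂ (Or.inr h₂)) (hC (min k₁ k₃) w₁ w₃ (hor _ _ _ _ h₁ h₃))).trans ?_)
    rw [← hK k₂ (min k₁ k₃) _ _ (by omega)]
    apply le_of_eq; ring
  by_cases c1 : k₁ ≤ k₂ ∧ k₁ ≤ k₃
  · refine (quad_A1 μ w₀ w₁ w₂ w₃).trans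
      ((mul_le_mul' (hC k₁ w₀ w₁ (Or.inr h₁)) (hC (min k₃ k₂) w₃ w₂ (hor _ _ _ _ h₃ h₂))).trans ?_)
    rw [← hK k₁ (min k₃ k₂) _ _ (by omega)]
    apply le_of_eq; ring
  · rw [quad_symm]
    refine (quad_A1 μ w₀ w₃ w₂ w₁).trans
      ((mul_le_mul' (hC k₃ w₀ w₃ (Or.inr h₃)) (hC (min k₁ k₂) w₁ w₂ (hor _ _ _ _ h₁ h₂))).trans ?_)
    rw [← hK k₃ (min k₁ k₂) _ _ (by omega)]
    apply le_of_eq; ring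

lemma dyadic_qZ {k : ℕ} {x : VZ} (h : dyadicZ2 ((2:ℝ) ^ k) x) : qZ x ≤ 4 * 4 ^ k := by
  have h1 := h.2
  unfold jbZ2 at h1
  rw [Real.sqrt_lt' (by positivity)] at h1
  have h2 : (2 * (2:ℝ) ^ k) ^ 2 = 4 * 4 ^ k := by
    rw [mul_pow, ← pow_mul, mul_comm k 2, pow_mul]; norm_num
  rw [h2] at h1
  have : ((qZ x : ℤ) : ℝ) ≤ ((4 * 4 ^ k : ℤ) : ℝ) := by
    unfold qZ; push_cast; linarith
  exact_mod_cast this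

lemma dyadic_finite (k : ℕ) : {x : VZ | dyadicZ2 ((2:ℝ) ^ k) x}.Finite := by
  refine (Set.finite_Icc ((-(4 * 4 ^ k), -(4 * 4 ^ k)) : VZ) (4 * 4 ^ k, 4 * 4 ^ k)).subset ?_
  intro x hx
  have h := dyadic_qZ hx
  unfold qZ at h
  have a1 := Int.le_self_sq x.1
  have a2 := Int.le_self_sq x.2
  have a3 := Int.le_self_sq (-x.1)
  have a4 := Int.le_self_sq (-x.2)
  refine ⟨⟨?_, ?_⟩, ?_, ?_⟩ <;> simp <;> nlinarith [sq_nonneg x.1, sq_nonneg x.2]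

open Classical in
noncomputable def locZ (k : ℕ) (w : VZ → ℝ≥0∞) (x : VZ) : ℝ≥0∞ :=
  if dyadicZ2 ((2:ℝ) ^ k) x then w x else 0

lemma locZ_supp (k : ℕ) (w : VZ → ℝ≥0∞) (x : VZ) (h : locZ k w x ≠ 0) : qZ x ≤ 4 * 4 ^ k := by
  unfold locZ at h
  split_ifs at h with h1
  · exact dyadic_qZ h1
  · exact absurd rfl h

lemma tsum_locZ (k : ℕ) (w : VZ → ℝ≥0∞) :
    ∑' m : {m : ℤ × ℤ // dyadicZ2 ((2 : ℝ) ^ k) m}, (w m.1) ^ 2 = ∑' x, (locZ k w x) ^ 2 := by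
  classical
  refine (tsum_subtype {m | dyadicZ2 ((2 : ℝ) ^ k) m} (fun x => w x ^ 2)).trans ?_
  refine tsum_congr fun x => ?_
  simp only [Set.indicator_apply, Set.mem_ofPred_eq, locZ]
  split_ifs <;> simp

lemma tsum_locZ_lt_top (k : ℕ) (w : VZ → ℝ≥0∞) (h : ∀ x, w x ≠ ∞) :
    ∑' m : {m : ℤ × ℤ // dyadicZ2 ((2 : ℝ) ^ k) m}, (w m.1) ^ 2 ≠ ∞ := by
  have : Finite {m : ℤ × ℤ // dyadicZ2 ((2 : ℝ) ^ k) m} := (dyadic_finite k).to_subtype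
  have := Fintype.ofFinite {m : ℤ × ℤ // dyadicZ2 ((2 : ℝ) ^ k) m}
  rw [tsum_fintype]
  exact ENNReal.sum_ne_top.2 fun x _ => ENNReal.pow_ne_top (h _)

noncomputable def innerF (k₁ k₂ k₃ : ℕ) (μ : ℤ) (ω₁ ω₂ ω₃ : ℤ × ℤ → ℝ≥0) (n : VZ) : ℝ≥0∞ :=
  ∑' p : {q : (ℤ × ℤ) × (ℤ × ℤ) × (ℤ × ℤ) //
                q.1 - q.2.1 + q.2.2 = n ∧ PhiZ2 n q.1 q.2.1 q.2.2 = μ ∧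
                dyadicZ2 ((2 : ℝ) ^ k₁) q.1 ∧ dyadicZ2 ((2 : ℝ) ^ k₂) q.2.1 ∧
                dyadicZ2 ((2 : ℝ) ^ k₃) q.2.2},
              ((ω₁ p.1.1 : ℝ≥0∞) * (ω₂ p.1.2.1 : ℝ≥0∞) * (ω₃ p.1.2.2 : ℝ≥0∞))

lemma innerF_ne_top (k₁ k₂ k₃ : ℕ) (μ : ℤ) (ω₁ ω₂ ω₃ : ℤ × ℤ → ℝ≥0) (n : VZ) :
    innerF k₁ k₂ k₃ μ ω₁ ω₂ ω₃ n ≠ ∞ := by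
  unfold innerF
  have : Finite {q : (ℤ × ℤ) × (ℤ × ℤ) × (ℤ × ℤ) //
                q.1 - q.2.1 + q.2.2 = n ∧ PhiZ2 n q.1 q.2.1 q.2.2 = μ ∧
                dyadicZ2 ((2 : ℝ) ^ k₁) q.1 ∧ dyadicZ2 ((2 : ℝ) ^ k₂) q.2.1 ∧
                dyadicZ2 ((2 : ℝ) ^ k₃) q.2.2} := by
    refine Set.Finite.to_subtype (((dyadic_finite k₁).prod ((dyadic_finite k₂).prod
      (dyadic_finite k₃))).subset ?_)
    intro q hq
    exact ⟨hq.2.2.1, hq.2.2.2.1, hq.2.2.2.2⟩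
  have := Fintype.ofFinite {q : (ℤ × ℤ) × (ℤ × ℤ) × (ℤ × ℤ) //
                q.1 - q.2.1 + q.2.2 = n ∧ PhiZ2 n q.1 q.2.1 q.2.2 = μ ∧
                dyadicZ2 ((2 : ℝ) ^ k₁) q.1 ∧ dyadicZ2 ((2 : ℝ) ^ k₂) q.2.1 ∧
                dyadicZ2 ((2 : ℝ) ^ k₃) q.2.2}
  rw [tsum_fintype]
  exact ENNReal.sum_ne_top.2 fun x _ =>
    ENNReal.mul_ne_top (ENNReal.mul_ne_top ENNReal.coe_ne_top ENNReal.coe_ne_top) ENNReal.coe_ne_top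

lemma innerF_eq (k₁ k₂ k₃ : ℕ) (μ : ℤ) (ω₁ ω₂ ω₃ : ℤ × ℤ → ℝ≥0) (n : VZ) :
    innerF k₁ k₂ k₃ μ ω₁ ω₂ ω₃ n = ∑' (n₁ : VZ) (n₂ : VZ) (n₃ : VZ),
      if n₁ - n₂ + n₃ = n ∧ qZ n - qZ n₁ + qZ n₂ - qZ n₃ = μ then
        (locZ k₁ (fun x => ω₁ x) n₁ * locZ k₂ (fun x => ω₂ x) n₂ * locZ k₃ (fun x => ω₃ x) n₃)
        else 0 := by
  classical
  unfold innerF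
  refine (tsum_subtype {q : VZ × VZ × VZ |
                q.1 - q.2.1 + q.2.2 = n ∧ PhiZ2 n q.1 q.2.1 q.2.2 = μ ∧
                dyadicZ2 ((2 : ℝ) ^ k₁) q.1 ∧ dyadicZ2 ((2 : ℝ) ^ k₂) q.2.1 ∧
                dyadicZ2 ((2 : ℝ) ^ k₃) q.2.2} (fun q : VZ × VZ × VZ =>
                ((ω₁ q.1 : ℝ≥0∞) * (ω₂ q.2.1 : ℝ≥0∞) * (ω₃ q.2.2 : ℝ≥0∞)))).trans ?_
  rw [ENNReal.tsum_prod']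
  refine tsum_congr fun n₁ => ?_
  rw [tsum_VV]
  refine tsum_congr fun n₂ => tsum_congr fun n₃ => ?_
  have hphi : PhiZ2 n n₁ n₂ n₃ = qZ n - qZ n₁ + qZ n₂ - qZ n₃ := rfl
  simp only [Set.indicator_apply, Set.mem_ofPred_eq, hphi, locZ]
  by_cases h1 : dyadicZ2 ((2 : ℝ) ^ k₁) n₁ <;> by_cases h2 : dyadicZ2 ((2 : ℝ) ^ k₂) n₂ <;>
    by_cases h3 : dyadicZ2 ((2 : ℝ) ^ k₃) n₃ <;> simp [h1, h2, h3]

/-- Dyadically localized trilinear estimate on the resonance level set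
`Φ = μ` for the cubic NLS on `𝕋²`, with constant `C (N_med N_min)^ε`.
Powers of two `N = 2^k`, `N_j = 2^{k_j}`. -/
theorem trilinear_dyadic_resonance_estimate (ε : ℝ) (hε : 0 < ε) :
    ∃ C : ℝ, 0 < C ∧
      ∀ (k k₁ k₂ k₃ : ℕ) (μ : ℤ) (ω₁ ω₂ ω₃ : ℤ × ℤ → ℝ≥0),
        (∑' n : {m : ℤ × ℤ // dyadicZ2 ((2 : ℝ) ^ k) m},
            (∑' p : {q : (ℤ × ℤ) × (ℤ × ℤ) × (ℤ × ℤ) //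
                q.1 - q.2.1 + q.2.2 = n.1 ∧ PhiZ2 n.1 q.1 q.2.1 q.2.2 = μ ∧
                dyadicZ2 ((2 : ℝ) ^ k₁) q.1 ∧ dyadicZ2 ((2 : ℝ) ^ k₂) q.2.1 ∧
                dyadicZ2 ((2 : ℝ) ^ k₃) q.2.2},
              ((ω₁ p.1.1 : ℝ≥0∞) * (ω₂ p.1.2.1 : ℝ≥0∞) * (ω₃ p.1.2.2 : ℝ≥0∞))) ^ 2) ^ (1/2 : ℝ)
        ≤ ENNReal.ofReal
            (C * ((2 : ℝ) ^ (max (min k₁ k₂) (min (max k₁ k₂) k₃)) *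
                  (2 : ℝ) ^ (min k₁ (min k₂ k₃))) ^ ε) *
          (∑' m : {m : ℤ × ℤ // dyadicZ2 ((2 : ℝ) ^ k₁) m}, ((ω₁ m.1 : ℝ≥0∞)) ^ 2) ^ (1/2 : ℝ) *
          (∑' m : {m : ℤ × ℤ // dyadicZ2 ((2 : ℝ) ^ k₂) m}, ((ω₂ m.1 : ℝ≥0∞)) ^ 2) ^ (1/2 : ℝ) *
          (∑' m : {m : ℤ × ℤ // dyadicZ2 ((2 : ℝ) ^ k₃) m}, ((ω₃ m.1 : ℝ≥0∞)) ^ 2) ^ (1/2 : ℝ) := by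
  obtain ⟨C, hC0, hC⟩ := quad_bound ε hε
  refine ⟨C, hC0, fun k k₁ k₂ k₃ μ ω₁ ω₂ ω₃ => ?_⟩
  set X := ∑' n : {m : ℤ × ℤ // dyadicZ2 ((2 : ℝ) ^ k) m},
    (innerF k₁ k₂ k₃ μ ω₁ ω₂ ω₃ n.1) ^ 2 with hX
  have hXtop : X ≠ ∞ := tsum_locZ_lt_top k _ (innerF_ne_top k₁ k₂ k₃ μ ω₁ ω₂ ω₃)
  change X ^ (1/2 : ℝ) ≤ _
  set K := ENNReal.ofReal (C * ((2 : ℝ) ^ (max (min k₁ k₂) (min (max k₁ k₂) k₃)) *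
                  (2 : ℝ) ^ (min k₁ (min k₂ k₃))) ^ ε) with hKdef
  rw [tsum_locZ k₁ (fun x => (ω₁ x : ℝ≥0∞)), tsum_locZ k₂ (fun x => (ω₂ x : ℝ≥0∞)),
    tsum_locZ k₃ (fun x => (ω₃ x : ℝ≥0∞))]
  set w₁ := locZ k₁ (fun x => (ω₁ x : ℝ≥0∞))
  set w₂ := locZ k₂ (fun x => (ω₂ x : ℝ≥0∞))
  set w₃ := locZ k₃ (fun x => (ω₃ x : ℝ≥0∞))
  have hX' : X = ∑' x, (locZ k (innerF k₁ k₂ k₃ μ ω₁ ω₂ ω₃) x) ^ 2 := tsum_locZ k _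
  have hq : X = quadZ μ (locZ k (innerF k₁ k₂ k₃ μ ω₁ ω₂ ω₃)) w₁ w₂ w₃ := by
    rw [hX']
    unfold quadZ
    refine tsum_congr fun n => ?_
    have e : (locZ k (innerF k₁ k₂ k₃ μ ω₁ ω₂ ω₃) n) ^ 2 =
        locZ k (innerF k₁ k₂ k₃ μ ω₁ ω₂ ω₃) n * innerF k₁ k₂ k₃ μ ω₁ ω₂ ω₃ n := by
      unfold locZ
      split_ifs
      · rw [pow_two]
      · simp
    rw [e, innerF_eq]
    simp_rw [← ENNReal.tsum_mul_left, mul_ite, mul_zero]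
    rfl
  have hmain := hC k₁ k₂ k₃ μ (locZ k (innerF k₁ k₂ k₃ μ ω₁ ω₂ ω₃)) w₁ w₂ w₃
    (locZ_supp _ _) (locZ_supp _ _) (locZ_supp _ _)
  rw [← hq, ← hX', ← hKdef] at hmain
  set Y := (∑' x, w₁ x ^ 2) * (∑' x, w₂ x ^ 2) * (∑' x, w₃ x ^ 2) with hY
  have hle : X ≤ K ^ 2 * Y := by
    by_cases h0 : X = 0
    · rw [h0]; exact zero_le
    · rw [pow_two, show K ^ 2 * (X * Y) = X * (K ^ 2 * Y) by ring] at hmain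
      exact (ENNReal.mul_le_mul_iff_right h0 hXtop).1 hmain
  calc X ^ (1/2 : ℝ) ≤ (K ^ 2 * Y) ^ (1/2 : ℝ) := by gcongr
    _ = _ := by
      rw [hY, ENNReal.mul_rpow_of_nonneg _ _ (by norm_num), ENNReal.mul_rpow_of_nonneg _ _ (by norm_num),
        ENNReal.mul_rpow_of_nonneg _ _ (by norm_num), ← ENNReal.rpow_two, ← ENNReal.rpow_mul]
      norm_num [mul_assoc]
end

section
/- Let 1/2 < α < 1. There exists C > 0, depending only on α, such that for every real K ≥ 1, every real μ*, and every k* ∈ ℤ, the number of pairs (k, l) ∈ ℤ × ℤ satisfying k + l = k*, | |k|^{2α} + |l|^{2α} − μ* | ≤ 1, |k| ≤ |l|, and |k| ≤ K is at most C·K^{1−α}. -/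
open Set in
lemma aux_convex (p K : ℝ) (hp : 1 < p) (hp2 : p < 2) (hK : 1 ≤ K) :
    ConvexOn ℝ (Icc (-K) K)
      (fun x : ℝ => |x| ^ p - (p * (p - 1) * K ^ (p - 2)) / 2 * x ^ 2) := by
  set m := p * (p - 1) * K ^ (p - 2) with hm
  have hK0 : 0 < K := by linarith
  have hpow : ∀ x ∈ Ioo 0 K, K ^ (p - 2) ≤ x ^ (p - 2) := fun x hx =>
    Real.rpow_le_rpow_of_nonpos hx.1 hx.2.le (by linarith)
  have hcont : ContinuousOn (fun x : ℝ => x ^ p - m / 2 * x ^ 2) (Icc 0 K) := by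
    apply ContinuousOn.sub
    · exact (Real.continuous_rpow_const (by linarith)).continuousOn
    · fun_prop
  have hd1 : ∀ x ∈ Ioo 0 K, HasDerivAt (fun x : ℝ => x ^ p - m / 2 * x ^ 2)
      (p * x ^ (p - 1) - m * x) x := by
    intro x hx
    have h1 := Real.hasDerivAt_rpow_const (x := x) (p := p) (Or.inl hx.1.ne')
    have h2 := ((hasDerivAt_pow 2 x).const_mul (m / 2))
    refine (h1.sub h2).congr_deriv ?_
    push_cast
    ring
  have hd2 : ∀ x ∈ Ioo 0 K, HasDerivAt (fun x : ℝ => p * x ^ (p - 1) - m * x)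
      (p * ((p - 1) * x ^ (p - 2)) - m) x := by
    intro x hx
    have h1 := (Real.hasDerivAt_rpow_const (x := x) (p := p - 1) (Or.inl hx.1.ne')).const_mul p
    have h2 := ((hasDerivAt_id x).const_mul m)
    refine (h1.sub h2).congr_deriv ?_
    rw [show p - 1 - 1 = p - 2 by ring]
    ring
  have hconv : ConvexOn ℝ (Icc 0 K) (fun x : ℝ => x ^ p - m / 2 * x ^ 2) := by
    apply convexOn_of_hasDerivWithinAt2_nonneg (convex_Icc 0 K) hcont
      (f' := fun x => p * x ^ (p - 1) - m * x)
      (f'' := fun x => p * ((p - 1) * x ^ (p - 2)) - m)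
    · intro x hx
      rw [interior_Icc] at hx
      exact (hd1 x hx).hasDerivWithinAt
    · intro x hx
      rw [interior_Icc] at hx
      exact (hd2 x hx).hasDerivWithinAt
    · intro x hx
      rw [interior_Icc] at hx
      have := mul_le_mul_of_nonneg_left (hpow x hx)
        (show 0 ≤ p * (p - 1) by apply mul_nonneg <;> linarith)
      rw [hm]
      linarith
  have hmono : MonotoneOn (fun x : ℝ => x ^ p - m / 2 * x ^ 2) (Icc 0 K) := by
    apply monotoneOn_of_hasDerivWithinAt_nonneg (convex_Icc 0 K) hcont
      (f' := fun x => p * x ^ (p - 1) - m * x)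
    · intro x hx
      rw [interior_Icc] at hx
      exact (hd1 x hx).hasDerivWithinAt
    · intro x hx
      rw [interior_Icc] at hx
      have h0 := hpow x hx
      have h3 : 0 < K ^ (p - 2) := Real.rpow_pos_of_pos hK0 _
      have h1 : x ^ (p - 1) = x ^ (p - 2) * x := by
        rw [← Real.rpow_add_one hx.1.ne']; congr 1; ring
      rw [h1, hm]
      have h2 : (p - 1) * K ^ (p - 2) ≤ x ^ (p - 2) := by nlinarith
      have h4 : 0 ≤ p * x := mul_nonneg (by linarith) hx.1.le
      have := mul_le_mul_of_nonneg_left h2 h4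
      linarith
  have himg : (fun x : ℝ => |x|) '' Icc (-K) K ⊆ Icc 0 K := by
    rintro _ ⟨x, hx, rfl⟩
    exact ⟨abs_nonneg x, abs_le.2 hx⟩
  refine ⟨convex_Icc _ _, ?_⟩
  intro x hx y hy a b ha hb hab
  have hx' := himg ⟨x, hx, rfl⟩
  have hy' := himg ⟨y, hy, rfl⟩
  have h1 := hconv.2 hx' hy' ha hb hab
  have hz := himg ⟨_, convex_Icc (-K) K hx hy ha hb hab, rfl⟩
  have hw := convex_Icc 0 K hx' hy' ha hb hab
  have h2 := hmono hz hw (by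
    simp only [smul_eq_mul]
    refine (abs_add_le _ _).trans ?_
    rw [abs_mul, abs_mul, abs_of_nonneg ha, abs_of_nonneg hb])
  have h3 := h2.trans h1
  simpa only [sq_abs] using h3

lemma aux_three (p K : ℝ) (hp : 1 < p) (hp2 : p < 2) (hK : 1 ≤ K) (s μ a b c : ℝ)
    (hab : a ≤ b) (hbc : b ≤ c) (ha : |a| ≤ K) (hc : |c| ≤ K)
    (fa : |(|a| ^ p + |s - a| ^ p - μ)| ≤ 1)
    (fb : |(|b| ^ p + |s - b| ^ p - μ)| ≤ 1)
    (fc : |(|c| ^ p + |s - c| ^ p - μ)| ≤ 1) :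
    (p * (p - 1) * K ^ (p - 2)) * ((b - a) * (c - b)) ≤ 4 := by
  have hG := aux_convex p K hp hp2 hK
  set m := p * (p - 1) * K ^ (p - 2) with hm
  rcases eq_or_lt_of_le (hab.trans hbc) with h | h
  · have : b = a := by linarith
    subst this
    simp
  have hH : ∀ x y u v : ℝ, 0 ≤ u → 0 ≤ v → u + v = 1 →
      |u * x + v * y| ^ p ≤ u * |x| ^ p + v * |y| ^ p := by
    intro x y u v hu hv huv
    have h1 := (convexOn_rpow hp.le).2 (Set.mem_Ici.2 (abs_nonneg x))
      (Set.mem_Ici.2 (abs_nonneg y)) hu hv huv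
    refine le_trans ?_ h1
    apply Real.rpow_le_rpow (abs_nonneg _) _ (by linarith)
    simp only [smul_eq_mul]
    refine (abs_add_le _ _).trans ?_
    rw [abs_mul, abs_mul, abs_of_nonneg hu, abs_of_nonneg hv]
  have hd : 0 < c - a := by linarith
  obtain ⟨u, hu⟩ : ∃ u, u = (c - b) / (c - a) := ⟨_, rfl⟩
  obtain ⟨v, hv⟩ : ∃ v, v = (b - a) / (c - a) := ⟨_, rfl⟩
  have hu0 : 0 ≤ u := hu ▸ div_nonneg (by linarith) hd.le
  have hv0 : 0 ≤ v := hv ▸ div_nonneg (by linarith) hd.le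
  have huv : u + v = 1 := by rw [hu, hv]; field_simp; ring
  have hb : b = u * a + v * c := by rw [hu, hv]; field_simp; ring
  have h1 := hG.2 (abs_le.1 ha) (abs_le.1 hc) hu0 hv0 huv
  have h2 := hH (s - a) (s - c) u v hu0 hv0 huv
  have e2 : u * (s - a) + v * (s - c) = s - b := by
    rw [hb]; linear_combination s * huv
  rw [e2] at h2
  simp only [smul_eq_mul] at h1
  rw [← hb] at h1
  have e3 : (b - a) * (c - b) = u * a ^ 2 + v * c ^ 2 - b ^ 2 := by
    have hu' : u = 1 - v := by linarith
    rw [hb, hu']; ring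
  rw [e3]
  have fa' := (abs_le.1 fa).2
  have fb' := (abs_le.1 fb).1
  have fc' := (abs_le.1 fc).2
  have k1 := mul_le_mul_of_nonneg_left fa' hu0
  have k2 := mul_le_mul_of_nonneg_left fc' hv0
  have e4 : u * μ + v * μ = μ := by rw [← add_mul, huv, one_mul]
  linarith

/-- For `1/2 < α < 1` there is `C > 0` (depending only on `α`) such that
for every `K ≥ 1`, every real `μ*`, and every `k* ∈ ℤ`, the number of pairs `(k,l) ∈ ℤ²` with
`k + l = k*`, `||k|^{2α} + |l|^{2α} - μ*| ≤ 1`, `|k| ≤ |l|`, `|k| ≤ K` is at most `C K^{1-α}`. -/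
theorem count_sum_of_fractional_powers (α : ℝ) (hα : 1/2 < α) (hα' : α < 1) :
    ∃ C : ℝ, 0 < C ∧
      ∀ (K : ℝ), 1 ≤ K → ∀ (μs : ℝ) (ks : ℤ),
        ({p : ℤ × ℤ | p.1 + p.2 = ks ∧
            |(|(p.1 : ℝ)| ^ (2 * α) + |(p.2 : ℝ)| ^ (2 * α) - μs)| ≤ 1 ∧
            |p.1| ≤ |p.2| ∧ (|p.1| : ℝ) ≤ K}).Finite ∧
        (({p : ℤ × ℤ | p.1 + p.2 = ks ∧
            |(|(p.1 : ℝ)| ^ (2 * α) + |(p.2 : ℝ)| ^ (2 * α) - μs)| ≤ 1 ∧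
            |p.1| ≤ |p.2| ∧ (|p.1| : ℝ) ≤ K}).ncard : ℝ) ≤ C * K ^ (1 - α) := by

  have hp : 1 < 2 * α := by linarith
  have hp2 : 2 * α < 2 := by linarith
  have hq : 0 < 2 * α * (2 * α - 1) := mul_pos (by linarith) (by linarith)
  obtain ⟨A, hA⟩ : ∃ A, A = √(4 / (2 * α * (2 * α - 1))) := ⟨_, rfl⟩
  have hA0 : 0 < A := by rw [hA]; positivity
  have hA2 : 2 * α * (2 * α - 1) * A ^ 2 = 4 := by
    rw [hA, Real.sq_sqrt (by positivity)]; exact mul_div_cancel₀ 4 hq.ne'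
  refine ⟨2 * A + 2, by positivity, ?_⟩
  intro K hK μs ks
  have hK0 : 0 < K := by linarith
  set S := {p : ℤ × ℤ | p.1 + p.2 = ks ∧
            |(|(p.1 : ℝ)| ^ (2 * α) + |(p.2 : ℝ)| ^ (2 * α) - μs)| ≤ 1 ∧
            |p.1| ≤ |p.2| ∧ (|p.1| : ℝ) ≤ K} with hS
  have hfin : S.Finite := by
    apply ((Finset.Icc (-⌈K⌉) ⌈K⌉).image (fun k => (k, ks - k))).finite_toSet.subset
    rintro ⟨k, l⟩ ⟨h1, -, -, h4⟩
    simp only at h1 h4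
    have h5 := abs_le.1 h4
    have h6 := Int.le_ceil K
    simp only [Finset.coe_image, Finset.coe_Icc, Set.mem_image, Set.mem_Icc, Prod.mk.injEq]
    refine ⟨k, ⟨?_, ?_⟩, rfl, by omega⟩
    · have : ((-⌈K⌉ : ℤ) : ℝ) ≤ k := by push_cast; linarith
      exact_mod_cast this
    · have : (k : ℝ) ≤ (⌈K⌉ : ℤ) := by linarith
      exact_mod_cast this
  refine ⟨hfin, ?_⟩
  obtain ⟨L, hL⟩ : ∃ L, L = A * K ^ (1 - α) := ⟨_, rfl⟩
  have hL0 : 0 < L := by rw [hL]; positivity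
  have hone : 1 ≤ K ^ (1 - α) := Real.one_le_rpow hK (by linarith)
  have hmL : (2 * α * (2 * α - 1) * K ^ (2 * α - 2)) * L ^ 2 = 4 := by
    have : K ^ (2 * α - 2) * (K ^ (1 - α)) ^ 2 = 1 := by
      rw [← Real.rpow_natCast, ← Real.rpow_mul hK0.le, ← Real.rpow_add hK0]
      convert Real.rpow_zero K using 2
      push_cast; ring
    rw [hL]
    linear_combination (2 * α * (2 * α - 1) * A ^ 2) * this + hA2
  rcases S.eq_empty_or_nonempty with he | hne
  · rw [he]; simp; positivity
  obtain ⟨P, hP, hPmin⟩ := Set.exists_min_image S (fun p => p.1) hfin hne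
  obtain ⟨Q, hQ, hQmax⟩ := Set.exists_max_image S (fun p => p.1) hfin hne
  have hsub : S ⊆ ((Finset.Icc P.1 (P.1 + ⌊L⌋) ∪ Finset.Icc (Q.1 - ⌊L⌋) Q.1).image
      (fun k => (k, ks - k)) : Finset (ℤ × ℤ)) := by
    intro R hR
    have g1 := hPmin R hR
    have g2 := hQmax R hR
    have key : ∀ T ∈ S, |(|(T.1 : ℝ)| ^ (2 * α) + |(ks : ℝ) - T.1| ^ (2 * α) - μs)| ≤ 1 := by
      rintro T ⟨h1, h2, -, -⟩
      have : (ks : ℝ) - T.1 = T.2 := by rw [← h1]; push_cast; ring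
      rw [this]; exact h2
    have h3 := aux_three (2 * α) K hp hp2 hK ks μs P.1 R.1 Q.1 (by exact_mod_cast g1)
      (by exact_mod_cast g2) hP.2.2.2 hQ.2.2.2 (key P hP) (key R hR) (key Q hQ)
    rw [← hmL] at h3
    have hmpos : 0 < 2 * α * (2 * α - 1) * K ^ (2 * α - 2) := by positivity
    have h4 := le_of_mul_le_mul_left h3 hmpos
    simp only [Finset.coe_image, Set.mem_image, Finset.mem_coe, Finset.mem_union, Finset.mem_Icc]
    refine ⟨R.1, ?_, Prod.ext rfl (by have := hR.1; simp only; omega)⟩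
    by_cases h5 : ((R.1 - P.1 : ℤ) : ℝ) ≤ L
    · left
      have := Int.le_floor.2 h5
      omega
    · right
      have h6 : ((Q.1 - R.1 : ℤ) : ℝ) ≤ L := by
        by_contra h7
        push_cast at h5 h7
        push Not at h5 h7
        nlinarith
      have := Int.le_floor.2 h6
      omega
  have hcard : S.ncard ≤ (⌊L⌋ + 1).toNat + (⌊L⌋ + 1).toNat := by
    refine (Set.ncard_le_ncard hsub (Finset.finite_toSet _)).trans ?_
    rw [Set.ncard_coe_finset]
    refine Finset.card_image_le.trans ((Finset.card_union_le _ _).trans ?_)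
    rw [Int.card_Icc, Int.card_Icc]
    apply le_of_eq
    congr 2 <;> ring
  have hfl0 : 0 ≤ ⌊L⌋ := Int.floor_nonneg.2 hL0.le
  have hcard' : (S.ncard : ℤ) ≤ 2 * (⌊L⌋ + 1) := by omega
  have hcard2 : (S.ncard : ℝ) ≤ 2 * ((⌊L⌋ : ℝ) + 1) := by exact_mod_cast hcard'
  have := Int.floor_le L
  calc (S.ncard : ℝ) ≤ 2 * (L + 1) := by linarith
    _ ≤ (2 * A + 2) * K ^ (1 - α) := by rw [hL]; linarith
end

section
/- Let 1/2 < α < 1 and c > 0. There exists C > 0, depending only on α and c, such that for every real K ≥ 1, every real μ*, and every k* ∈ ℤ with |k*| ≥ c·K^{1−α}, the number of pairs (k, l) ∈ ℤ × ℤ satisfying k − l = k*, | |k|^{2α} − |l|^{2α} − μ* | ≤ 1, |k| ≤ |l|, and |k| ≤ K is at most C·K^{1−α}. -/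
lemma aux_pos (β : ℝ) (h0 : 0 < β) (h1 : β < 1) (R u v : ℝ) (hu : 0 ≤ u) (huv : u ≤ v)
    (hv : v ≤ R) : β * R ^ (β - 1) * (v - u) ≤ v ^ β - u ^ β := by
  rcases eq_or_lt_of_le (hu.trans huv) with h | hvp
  · have : u = 0 := by linarith
    subst this; subst h; simp
  have hb := rpow_one_add_le_one_add_mul_self (s := u / v - 1) (p := β)
    (by have : 0 ≤ u / v := by positivity
        linarith) h0.le h1.le
  have e : 1 + (u / v - 1) = u / v := by ring
  rw [e, Real.div_rpow hu hvp.le, div_le_iff₀ (by positivity)] at hb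
  have e2 : v ^ β = v ^ (β - 1) * v := by
    rw [← Real.rpow_add_one hvp.ne']; congr 1; ring
  have e3 : (1 + β * (u / v - 1)) * v ^ β = v ^ β - β * v ^ (β - 1) * (v - u) := by
    rw [e2]; field_simp; ring
  have h4 : R ^ (β - 1) ≤ v ^ (β - 1) :=
    Real.rpow_le_rpow_of_nonpos hvp hv (by linarith)
  have h5 : β * R ^ (β - 1) * (v - u) ≤ β * v ^ (β - 1) * (v - u) := by
    have : 0 ≤ v - u := by linarith
    gcongr
  linarith

lemma g_pos (p : ℝ) (hp : 1 < p) (x : ℝ) (hx : 0 ≤ x) :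
    |x| ^ (p - 2) * x = x ^ (p - 1) := by
  rw [abs_of_nonneg hx]
  rcases eq_or_lt_of_le hx with h | h
  · subst h
    rw [Real.zero_rpow (by linarith : p - 1 ≠ 0)]; simp
  · rw [← Real.rpow_add_one h.ne']; congr 1; ring

lemma g_neg (p : ℝ) (hp : 1 < p) (x : ℝ) (hx : x ≤ 0) :
    |x| ^ (p - 2) * x = - (-x) ^ (p - 1) := by
  rw [← g_pos p hp (-x) (by linarith), abs_neg]; ring

lemma g_diff (p : ℝ) (hp : 1 < p) (hp2 : p < 2) (R u v : ℝ) (hu : -R ≤ u) (huv : u ≤ v)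
    (hv : v ≤ R) :
    (p - 1) * R ^ (p - 2) * (v - u) ≤ |v| ^ (p - 2) * v - |u| ^ (p - 2) * u := by
  have A := aux_pos (p - 1) (by linarith) (by linarith) R
  have e : p - 1 - 1 = p - 2 := by ring
  rw [e] at A
  have z : (0:ℝ) ^ (p - 1) = 0 := Real.zero_rpow (by linarith)
  rcases le_total 0 u with h | h
  · rw [g_pos p hp u h, g_pos p hp v (by linarith)]
    exact A u v h huv hv
  · rcases le_total 0 v with h' | h'
    · rw [g_neg p hp u h, g_pos p hp v h']
      have a1 := A 0 v le_rfl h' hv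
      have a2 := A 0 (-u) le_rfl (by linarith) (by linarith)
      rw [z] at a1 a2
      linarith
    · rw [g_neg p hp u h, g_neg p hp v h']
      have a1 := A (-v) (-u) (by linarith) (by linarith) (by linarith)
      linarith

lemma F_diff (p : ℝ) (hp : 1 < p) (hp2 : p < 2) (K h m : ℝ) (h0 : 0 ≤ h)
    (hK : h ≤ K) (hm : h ≤ m) (x y : ℝ) (hx : |x| ≤ K) (hy : |y| ≤ K) (hxy : x ≤ y) :
    p * ((p - 1) * (2 * K) ^ (p - 2) * h) * (y - x) ≤
      (|y| ^ p - |y - m| ^ p) - (|x| ^ p - |x - m| ^ p) := by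
  have hd : ∀ x : ℝ, HasDerivAt (fun x : ℝ => |x| ^ p - |x - m| ^ p)
      (p * |x| ^ (p - 2) * x - p * |x - m| ^ (p - 2) * (x - m)) x := by
    intro x
    refine (hasDerivAt_abs_rpow x hp).sub ?_
    exact HasDerivAt.comp_sub_const (f := fun x : ℝ => |x| ^ p) x m (hasDerivAt_abs_rpow (x - m) hp)
  refine (convex_Icc (-K) K).mul_sub_le_image_sub_of_le_deriv
    (f := fun x : ℝ => |x| ^ p - |x - m| ^ p) ?_ ?_ ?_ x (abs_le.1 hx) y (abs_le.1 hy) hxy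
  · exact fun x _ => (hd x).continuousAt.continuousWithinAt
  · exact fun x _ => (hd x).differentiableAt.differentiableWithinAt
  · intro t ht
    obtain ⟨t1, t2⟩ := interior_subset ht
    rw [(hd t).deriv]
    have a1 := g_diff p hp hp2 (2 * K) (t - h) t (by linarith) (by linarith) (by linarith)
    have a2 := g_diff p hp hp2 (|t| + m) (t - m) (t - h) (by linarith [neg_abs_le t])
      (by linarith) (by linarith [le_abs_self t])
    have a3 : 0 ≤ (p - 1) * (|t| + m) ^ (p - 2) * (t - h - (t - m)) := by
      have : 0 ≤ t - h - (t - m) := by linarith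
      have : 0 ≤ p - 1 := by linarith
      have : 0 ≤ |t| + m := by linarith [abs_nonneg t]
      positivity
    have a4 : (p - 1) * (2 * K) ^ (p - 2) * h ≤
        |t| ^ (p - 2) * t - |t - m| ^ (p - 2) * (t - m) := by
      have : t - (t - h) = h := by ring
      rw [this] at a1
      linarith
    have := mul_le_mul_of_nonneg_left a4 (by linarith : 0 ≤ p)
    linarith

lemma F_absdiff (p : ℝ) (hp : 1 < p) (hp2 : p < 2) (K h m : ℝ) (h0 : 0 ≤ h)
    (hK : h ≤ K) (hm : h ≤ |m|) (x y : ℝ) (hx : |x| ≤ K) (hy : |y| ≤ K) :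
    p * ((p - 1) * (2 * K) ^ (p - 2) * h) * |y - x| ≤
      |(|y| ^ p - |y - m| ^ p) - (|x| ^ p - |x - m| ^ p)| := by
  wlog hm0 : 0 ≤ m generalizing m x y
  · have := this (-m) (by rwa [abs_neg]) (-x) (-y) (by rwa [abs_neg]) (by rwa [abs_neg])
      (by linarith)
    have e1 : ∀ z : ℝ, |-z - -m| = |z - m| := fun z => by
      rw [← abs_neg]; congr 1; ring
    have e2 : |-y - -x| = |y - x| := by
      rw [← abs_neg]; congr 1; ring
    rwa [e1, e1, e2, abs_neg, abs_neg] at this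
  rw [abs_of_nonneg hm0] at hm
  rcases le_total x y with hxy | hxy
  · rw [abs_of_nonneg (by linarith : 0 ≤ y - x)]
    exact (F_diff p hp hp2 K h m h0 hK hm x y hx hy hxy).trans (le_abs_self _)
  · rw [abs_sub_comm, abs_of_nonneg (by linarith : 0 ≤ x - y), abs_sub_comm]
    exact (F_diff p hp hp2 K h m h0 hK hm y x hy hx hxy).trans (le_abs_self _)

/-- For `1/2 < α < 1` and `c > 0` there is `C > 0` (depending only on `α, c`)
such that for every `K ≥ 1`, every real `μ*`, and every `k* ∈ ℤ` with `|k*| ≥ c K^{1-α}`,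
the number of pairs `(k,l) ∈ ℤ²` with `k - l = k*`, `||k|^{2α} - |l|^{2α} - μ*| ≤ 1`,
`|k| ≤ |l|`, `|k| ≤ K` is at most `C K^{1-α}`. -/
theorem count_difference_of_fractional_powers (α : ℝ) (hα : 1/2 < α) (hα' : α < 1)
    (c : ℝ) (hc : 0 < c) :
    ∃ C : ℝ, 0 < C ∧
      ∀ (K : ℝ), 1 ≤ K → ∀ (μs : ℝ) (ks : ℤ), c * K ^ (1 - α) ≤ (|ks| : ℝ) →
        ({p : ℤ × ℤ | p.1 - p.2 = ks ∧
            |(|(p.1 : ℝ)| ^ (2 * α) - |(p.2 : ℝ)| ^ (2 * α) - μs)| ≤ 1 ∧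
            |p.1| ≤ |p.2| ∧ (|p.1| : ℝ) ≤ K}).Finite ∧
        (({p : ℤ × ℤ | p.1 - p.2 = ks ∧
            |(|(p.1 : ℝ)| ^ (2 * α) - |(p.2 : ℝ)| ^ (2 * α) - μs)| ≤ 1 ∧
            |p.1| ≤ |p.2| ∧ (|p.1| : ℝ) ≤ K}).ncard : ℝ) ≤ C * K ^ (1 - α) := by
  have hd0 : 0 < 2 * α * ((2 * α - 1) * 2 ^ (2 * α - 2) * min c 1) := by
    have : 0 < 2 * α - 1 := by linarith
    have : 0 < α := by linarith
    have : 0 < min c 1 := lt_min hc one_pos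
    positivity
  set d := 2 * α * ((2 * α - 1) * 2 ^ (2 * α - 2) * min c 1) with hd
  refine ⟨4 / d + 1, by positivity, ?_⟩
  intro K hK μs ks hks
  set S := {p : ℤ × ℤ | p.1 - p.2 = ks ∧
            |(|(p.1 : ℝ)| ^ (2 * α) - |(p.2 : ℝ)| ^ (2 * α) - μs)| ≤ 1 ∧
            |p.1| ≤ |p.2| ∧ (|p.1| : ℝ) ≤ K} with hS
  have hK0 : 0 < K := by linarith
  have hP1 : 1 ≤ K ^ (1 - α) := Real.one_le_rpow hK (by linarith)
  rcases S.eq_empty_or_nonempty with he | ⟨q, hq⟩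
  · rw [he]
    refine ⟨Set.finite_empty, ?_⟩
    simp only [Set.ncard_empty, Nat.cast_zero]
    positivity
  have hPK : K ^ (1 - α) ≤ K := by
    calc K ^ (1 - α) ≤ K ^ (1:ℝ) := Real.rpow_le_rpow_of_exponent_le hK (by linarith)
      _ = K := Real.rpow_one K
  have hmin : 0 < min c 1 := lt_min hc one_pos
  have key : ∀ r ∈ S, |((r.1 : ℝ) - q.1)| ≤ 2 / d * K ^ (1 - α) := by
    intro r hr
    obtain ⟨r1, r2, -, r4⟩ := hr
    obtain ⟨q1, q2, -, q4⟩ := hq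
    have hr' : (r.2 : ℝ) = r.1 - ks := by rw [← r1]; push_cast; ring
    have hq' : (q.2 : ℝ) = q.1 - ks := by rw [← q1]; push_cast; ring
    rw [hr'] at r2
    rw [hq'] at q2
    have A := F_absdiff (2 * α) (by linarith) (by linarith) K (min c 1 * K ^ (1 - α)) ks
      (by positivity)
      (by nlinarith [min_le_right c 1])
      (by
        refine le_trans ?_ (by exact_mod_cast hks)
        gcongr
        exact min_le_left _ _) q.1 r.1 (by exact_mod_cast q4) (by exact_mod_cast r4)
    have e : 2 * α * ((2 * α - 1) * (2 * K) ^ (2 * α - 2) * (min c 1 * K ^ (1 - α)))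
        = d / K ^ (1 - α) := by
      rw [eq_div_iff (by positivity), Real.mul_rpow (by norm_num) hK0.le, hd]
      have : K ^ (2 * α - 2) * K ^ (1 - α) * K ^ (1 - α) = 1 := by
        rw [← Real.rpow_add hK0, ← Real.rpow_add hK0]
        ring_nf
        simp
      linear_combination (2 * α * ((2 * α - 1) * 2 ^ (2 * α - 2) * min c 1)) * this
    rw [e] at A
    have B : d / K ^ (1 - α) * |(r.1 : ℝ) - q.1| ≤ 2 := by
      refine A.trans ?_
      rw [abs_le] at r2 q2 ⊢
      constructor <;> linarith [r2.1, r2.2, q2.1, q2.2]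
    rw [div_mul_eq_mul_div, div_le_iff₀ (by positivity)] at B
    rw [div_mul_eq_mul_div, le_div_iff₀ hd0]
    linarith
  set N := ⌊2 / d * K ^ (1 - α)⌋ with hN
  have hN0 : 0 ≤ N := Int.floor_nonneg.2 (by positivity)
  have hsub : S ⊆ ((Finset.Icc (q.1 - N) (q.1 + N)).image (fun k : ℤ => (k, k - ks)) :
      Finset (ℤ × ℤ)) := by
    intro r hr
    have h1 := key r hr
    have h2 : |r.1 - q.1| ≤ N := by
      rw [hN, Int.le_floor]; push_cast; exact h1
    rw [abs_le] at h2
    simp only [Finset.coe_image, Set.mem_image, Finset.coe_Icc, Set.mem_Icc]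
    refine ⟨r.1, ⟨by linarith, by linarith⟩, ?_⟩
    have : r.1 - r.2 = ks := hr.1
    ext
    · rfl
    · simp only; linarith
  refine ⟨(Finset.finite_toSet _).subset hsub, ?_⟩
  have hc1 := Set.ncard_le_ncard hsub (Finset.finite_toSet _)
  rw [Set.ncard_coe_finset] at hc1
  have hc2 := hc1.trans Finset.card_image_le
  rw [Int.card_Icc] at hc2
  have hc3 : (S.ncard : ℤ) ≤ 2 * N + 1 := by omega
  have hc4 : (S.ncard : ℝ) ≤ 2 * N + 1 := by exact_mod_cast hc3
  have hfl : (N : ℝ) ≤ 2 / d * K ^ (1 - α) := Int.floor_le _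
  have : 4 / d = 2 * (2 / d) := by ring
  rw [this]
  linarith
end
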